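/- arXiv:1508.05293 — 3 statements merged into one kernel-verified Lean document; each statement's English description precedes it below -/
import Mathlib

section
/- For integers n >= 2 and b >= 1 with gcd(2n-2, b) = 1, the identity sum_{i=1}^{b-1} (b-i) * ( sum_{j=1}^{min(floor(i(2n-2)/b), n-2)} floor((j+1)/2) + sum_{j=n-2}^{floor(i(2n-2)/b)-1} ceil((j+3)/2) ) = n(b^2-1)(2n-1)/24 holds, where the second inner sum is empty when floor(i(2n-2)/b)-1 < n-2. -/
/-!
Write `n = m + 1` and `N = 2m`. Summing over `i` first, the left side becomes
`∑ d(k) q_k (q_k + 1) / 2` over `0 < k < N`, where `q_k = ⌊kb/N⌋` and `d(k)` is the number of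
positive roots of height `k`. With `x = kb/N` and the sawtooth `s(x) = x - ⌊x⌋ - 1/2`,
`q_k (q_k + 1) = x² - 2 x s(x) + (s(x)² - 1/4)`.

* The terms `x s(x)` contribute nothing, by the oddness of `s` and `s(2x) = s(x) + s(x + 1/2)`.
* The terms `s(x)² - 1/4` contribute an amount independent of `b`: since `s²` is even, only the
  weight `d(k) + d(N - k)` matters, and it is invariant under multiplication by `b` modulo `N`.

So the sum is `b² A + B` with `A` and `B` independent of `b`. It vanishes at `b = 1`, hence equals
`(b² - 1) A`, and `A` comes from the sum of the squared heights of the positive roots.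
-/

theorem mul_mod_pos_of_coprime {N b k : ℕ} (h : N.Coprime b) (hk0 : 0 < k) (hkN : k < N) :
    0 < k * b % N :=
  Nat.pos_of_ne_zero fun hmod =>
    Nat.not_dvd_of_pos_of_lt hk0 hkN (h.dvd_of_dvd_mul_right (Nat.dvd_of_mod_eq_zero hmod))

section Sawtooth

variable {K : Type*} [Field K] [LinearOrder K] [FloorRing K]

/-- The sawtooth function `x - ⌊x⌋ - 1/2`, i.e. the first Bernoulli polynomial made periodic.
Unlike Dedekind's `((x))`, it takes the value `-1/2` at the integers. -/
def sawtooth (x : K) : K := Int.fract x - 1 / 2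

variable [IsStrictOrderedRing K]

theorem sawtooth_add_natCast (x : K) (a : ℕ) : sawtooth (x + a) = sawtooth x := by
  rw [sawtooth, Int.fract_add_natCast, sawtooth]

theorem sawtooth_neg {x : K} (hx : Int.fract x ≠ 0) : sawtooth (-x) = -sawtooth x := by
  rw [sawtooth, Int.fract_neg hx, sawtooth]
  ring

theorem sawtooth_two_mul (x : K) : sawtooth (2 * x) = sawtooth x + sawtooth (x + 1 / 2) := by
  have hx := Int.floor_add_fract x
  have h0 := Int.fract_nonneg x
  have h1 := Int.fract_lt_one x
  simp only [sawtooth]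
  rcases lt_or_ge (Int.fract x) (1 / 2) with h | h
  · have hdouble : Int.fract (2 * x) = 2 * Int.fract x :=
      Int.fract_eq_iff.mpr ⟨by linarith, by linarith, 2 * ⌊x⌋, by push_cast; linarith⟩
    have hshift : Int.fract (x + 1 / 2) = Int.fract x + 1 / 2 :=
      Int.fract_eq_iff.mpr ⟨by linarith, by linarith, ⌊x⌋, by linarith⟩
    rw [hdouble, hshift]
    ring
  · have hdouble : Int.fract (2 * x) = 2 * Int.fract x - 1 :=
      Int.fract_eq_iff.mpr ⟨by linarith, by linarith, 2 * ⌊x⌋ + 1, by push_cast; linarith⟩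
    have hshift : Int.fract (x + 1 / 2) = Int.fract x - 1 / 2 :=
      Int.fract_eq_iff.mpr ⟨by linarith, by linarith, ⌊x⌋ + 1, by push_cast; linarith⟩
    rw [hdouble, hshift]
    ring

theorem sawtooth_natCast_mod_div (a N : ℕ) :
    sawtooth (((a % N : ℕ) : K) / N) = sawtooth ((a : K) / N) := by
  simp only [sawtooth, Int.fract_div_natCast_eq_div_natCast_mod, Nat.mod_mod]

theorem natCast_div_eq_sub_sawtooth (a N : ℕ) :
    ((a / N : ℕ) : K) = (a : K) / N - sawtooth ((a : K) / N) - 1 / 2 := by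
  rw [← Nat.floor_div_eq_div (K := K), natCast_floor_eq_intCast_floor (by positivity), sawtooth,
    ← Int.self_sub_fract]
  ring

theorem natCast_div_mul_natCast_div_add_one (a N : ℕ) :
    ((a / N : ℕ) : K) * ((a / N : ℕ) + 1) =
      ((a : K) / N) ^ 2 - 2 * ((a : K) / N) * sawtooth ((a : K) / N)
        + (sawtooth ((a : K) / N) ^ 2 - 1 / 4) := by
  rw [natCast_div_eq_sub_sawtooth]
  ring

variable {N b k : ℕ}

theorem sawtooth_sub_mul_div (h : N.Coprime b) (hk0 : 0 < k) (hkN : k < N) :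
    sawtooth ((((N - k) * b : ℕ) : K) / N) = -sawtooth (((k * b : ℕ) : K) / N) := by
  have hN : (N : K) ≠ 0 := Nat.cast_ne_zero.mpr (by omega)
  have hfract : Int.fract (((k * b : ℕ) : K) / N) ≠ 0 := by
    rw [Int.fract_div_natCast_eq_div_natCast_mod]
    exact div_ne_zero (Nat.cast_ne_zero.mpr (mul_mod_pos_of_coprime h hk0 hkN).ne') hN
  rw [← sawtooth_neg hfract, ← sawtooth_add_natCast (-_) b]
  congr 1
  push_cast [Nat.cast_sub hkN.le]
  field_simp
  ring

theorem sawtooth_two_mul_mul_div {m : ℕ} (hm : 0 < m) (hb : Odd b) (k : ℕ) :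
    sawtooth (((2 * k * b : ℕ) : K) / (2 * m : ℕ)) =
      sawtooth (((k * b : ℕ) : K) / (2 * m : ℕ)) +
        sawtooth ((((k + m) * b : ℕ) : K) / (2 * m : ℕ)) := by
  obtain ⟨c, rfl⟩ := hb
  have hm' : (m : K) ≠ 0 := Nat.cast_ne_zero.mpr hm.ne'
  have hdouble : ((2 * k * (2 * c + 1) : ℕ) : K) / (2 * m : ℕ) =
      2 * (((k * (2 * c + 1) : ℕ) : K) / (2 * m : ℕ)) := by
    push_cast
    ring
  have hshift : (((k + m) * (2 * c + 1) : ℕ) : K) / (2 * m : ℕ) =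
      ((k * (2 * c + 1) : ℕ) : K) / (2 * m : ℕ) + 1 / 2 + c := by
    push_cast
    field_simp
    ring
  rw [hdouble, hshift, sawtooth_add_natCast, sawtooth_two_mul]

end Sawtooth

section Sums

open Finset

theorem sum_Ico_one_reflect {M : Type*} [AddCommMonoid M] (f : ℕ → M) (N : ℕ) :
    ∑ k ∈ Ico 1 N, f (N - k) = ∑ k ∈ Ico 1 N, f k := by
  simpa using sum_Ico_reflect f 1 N.le_succ

theorem two_mul_sum_mul_of_reflect {R : Type*} [CommRing R] (d : ℕ → R) {g : ℕ → R} {N : ℕ}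
    (hg : ∀ k, 0 < k → k < N → g (N - k) = g k) :
    2 * ∑ k ∈ Ico 1 N, d k * g k = ∑ k ∈ Ico 1 N, (d k + d (N - k)) * g k := by
  have hreflect : ∑ k ∈ Ico 1 N, d k * g k = ∑ k ∈ Ico 1 N, d (N - k) * g k := by
    rw [← sum_Ico_one_reflect]
    exact sum_congr rfl fun k hk => by rw [hg k (mem_Ico.mp hk).1 (mem_Ico.mp hk).2]
  rw [two_mul]
  nth_rewrite 2 [hreflect]
  simp only [← sum_add_distrib, add_mul]

theorem sum_Ico_one_two_mul {M : Type*} [AddCommMonoid M] (f : ℕ → M) {m : ℕ} (hm : 0 < m) :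
    ∑ k ∈ Ico 1 (2 * m), f k = ∑ k ∈ Ico 1 m, f k + f m + ∑ k ∈ Ico 1 m, f (k + m) := by
  rw [← sum_Ico_consecutive f hm (by omega : m ≤ 2 * m),
    sum_eq_sum_Ico_succ_bot (by omega : m < 2 * m), sum_Ico_add' f, two_mul,
    add_comm 1 m, add_assoc]

theorem sum_Ico_one_mod_two_mul {R : Type*} [Ring R] (f : ℕ → R) {m : ℕ} (hm : 0 < m) :
    ∑ k ∈ Ico 1 (2 * m), ((k % 2 : ℕ) : R) * f k =
      ∑ k ∈ Ico 1 (2 * m), f k - ∑ k ∈ Ico 1 m, f (2 * k) := by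
  induction m, hm using Nat.le_induction with
  | base => simp
  | succ m hm ih =>
    have hodd : (2 * m + 1) % 2 = 1 := by omega
    rw [mul_add_one, sum_Ico_succ_top (by omega), sum_Ico_succ_top (by omega), ih,
      sum_Ico_succ_top (by omega), sum_Ico_succ_top (by omega), sum_Ico_succ_top hm, hodd,
      Nat.mul_mod_right]
    push_cast
    noncomm_ring

theorem sum_Icc_one_id {K : Type*} [Field K] [CharZero K] (q : ℕ) :
    ∑ t ∈ Icc 1 q, (t : K) = q * (q + 1) / 2 := by
  induction q with
  | zero => simp
  | succ q ih =>
    rw [sum_Icc_succ_top (by omega), ih]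
    push_cast
    ring

theorem sum_Ico_one_pow_two {K : Type*} [Field K] [CharZero K] {M : ℕ} (hM : 0 < M) :
    ∑ k ∈ Ico 1 M, (k : K) ^ 2 = (M - 1) * M * (2 * M - 1) / 6 := by
  induction M, hM using Nat.le_induction with
  | base => simp
  | succ M hM ih =>
    rw [sum_Ico_succ_top hM, ih]
    push_cast
    ring

theorem sum_Ico_one_pow_three {K : Type*} [Field K] [CharZero K] {M : ℕ} (hM : 0 < M) :
    ∑ k ∈ Ico 1 M, (k : K) ^ 3 = ((M - 1) * M / 2) ^ 2 := by
  induction M, hM using Nat.le_induction with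
  | base => simp
  | succ M hM ih =>
    rw [sum_Ico_succ_top hM, ih]
    push_cast
    ring

theorem sum_Ico_one_mul_mod {M : Type*} [AddCommMonoid M] {N b : ℕ} (h : N.Coprime b)
    (f : ℕ → M) : ∑ k ∈ Ico 1 N, f (k * b % N) = ∑ k ∈ Ico 1 N, f k := by
  have maps : Set.MapsTo (fun k => k * b % N) (Ico 1 N : Finset ℕ) (Ico 1 N : Finset ℕ) := by
    intro k hk
    rw [mem_coe, mem_Ico] at hk ⊢
    exact ⟨mul_mod_pos_of_coprime h hk.1 hk.2, Nat.mod_lt _ (by omega)⟩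
  have inj : Set.InjOn (fun k => k * b % N) (Ico 1 N : Finset ℕ) := by
    intro k hk l hl hkl
    rw [mem_coe, mem_Ico] at hk hl
    exact (Nat.ModEq.cancel_right_of_coprime h hkl).eq_of_lt_of_lt hk.2 hl.2
  exact sum_nbij _ maps inj (surjOn_of_injOn_of_card_le _ maps inj le_rfl) fun _ _ => rfl

theorem sum_Icc_div_reflect {M : Type*} [AddCommMonoid M] (f : ℕ → M) (N : ℕ) {b i : ℕ}
    (hib : i < b) :
    ∑ j ∈ Icc 1 (i * N / b), f (N - j) = ∑ k ∈ Ico 1 N with (b - i) * N ≤ k * b, f k := by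
  have hcond {k : ℕ} (hk : k ≤ N) : (N - k) * b ≤ i * N ↔ (b - i) * N ≤ k * b := by
    zify [hib.le, hk]
    constructor <;> intro h <;> linarith
  have hdiv (j : ℕ) : j ≤ i * N / b ↔ j * b ≤ i * N := Nat.le_div_iff_mul_le (by omega)
  have hlt {j : ℕ} (hj0 : 1 ≤ j) (hj : j * b ≤ i * N) : j < N := by
    by_contra! hNj
    nlinarith
  refine sum_nbij' (N - ·) (N - ·) ?_ ?_ ?_ ?_ fun _ _ => rfl <;> intro j hj <;>
    simp only [mem_Icc, mem_filter, mem_Ico, hdiv] at hj ⊢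
  · have hjN := hlt hj.1 hj.2
    rw [← hcond (by omega), Nat.sub_sub_self hjN.le]
    exact ⟨by omega, hj.2⟩
  · rw [hcond (by omega)]
    exact ⟨by omega, hj.2⟩
  · exact Nat.sub_sub_self (hlt hj.1 hj.2).le
  · exact Nat.sub_sub_self (by omega)

/-- Both sides sum `t f(k)` over the lattice points `(k, t)` with `0 < k < N`, `0 < t` and
`t N ≤ k b`; on the left, `i = b - t` and `j = N - k`. -/
theorem sum_sub_mul_sum_Icc_div {R : Type*} [CommRing R] (f : ℕ → R) (N b : ℕ) :
    ∑ i ∈ Icc 1 (b - 1), ((b : R) - i) * ∑ j ∈ Icc 1 (i * N / b), f (N - j) =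
      ∑ k ∈ Ico 1 N, f k * ∑ t ∈ Icc 1 (k * b / N), (t : R) := by
  have hcomm : ∀ t k, t ∈ Ico 1 b ∧ k ∈ {k ∈ Ico 1 N | t * N ≤ k * b} ↔
      t ∈ Icc 1 (k * b / N) ∧ k ∈ Ico 1 N := by
    intro t k
    simp only [mem_filter, mem_Ico, mem_Icc]
    constructor
    · rintro ⟨⟨ht0, -⟩, ⟨hk0, hkN⟩, htk⟩
      exact ⟨⟨ht0, (Nat.le_div_iff_mul_le (by omega)).mpr htk⟩, hk0, hkN⟩
    · rintro ⟨⟨ht0, htk⟩, hk0, hkN⟩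
      rw [Nat.le_div_iff_mul_le (by omega)] at htk
      exact ⟨⟨ht0, by nlinarith⟩, ⟨hk0, hkN⟩, htk⟩
  calc
    _ = ∑ i ∈ Ico 1 b, ((b - i : ℕ) : R) * ∑ k ∈ Ico 1 N with (b - i) * N ≤ k * b, f k := by
      have hIcc : Icc 1 (b - 1) = Ico 1 b := by
        ext i
        simp only [mem_Icc, mem_Ico]
        omega
      rw [hIcc]
      refine sum_congr rfl fun i hi => ?_
      have hib := (mem_Ico.mp hi).2
      rw [sum_Icc_div_reflect f N hib, Nat.cast_sub hib.le]
    _ = ∑ t ∈ Ico 1 b, (t : R) * ∑ k ∈ Ico 1 N with t * N ≤ k * b, f k :=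
      sum_Ico_one_reflect (fun t => (t : R) * ∑ k ∈ Ico 1 N with t * N ≤ k * b, f k) b
    _ = ∑ k ∈ Ico 1 N, f k * ∑ t ∈ Icc 1 (k * b / N), (t : R) := by
      simp only [mul_sum]
      rw [sum_comm' hcomm]
      simp only [mul_comm]

end Sums

section TypeD

open Finset

/-- The number of positive roots of height `k ≥ 1` in the root system of type `D_{m+1}`, that is,
the number of exponents `1, 3, …, 2m - 1, m` that are at least `k`. The subtraction truncates to
give the correct value `0` beyond the greatest height `2m - 1`. -/
def typeDRootCount (m k : ℕ) : ℕ := (2 * m - k + 1) / 2 + if k ≤ m then 1 else 0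

variable {m : ℕ}

theorem sum_floor_add_sum_ceil_eq_sum_typeDRootCount {R : Type*} [Ring R] (hm : 0 < m)
    {F : ℕ} (hF : F ≤ 2 * m) :
    (∑ j ∈ Icc 1 (min F (m - 1)), (((j + 1) / 2 : ℕ) : R))
        + ∑ j ∈ Icc ((m : ℤ) - 1) ((F : ℤ) - 1), (((j + 4) / 2 : ℤ) : R) =
      ∑ j ∈ Icc 1 F, (typeDRootCount m (2 * m - j) : R) := by
  have hsplit : Icc 1 F = Icc 1 (min F (m - 1)) ∪ Icc m F := by
    ext j
    simp only [mem_union, mem_Icc]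
    omega
  have hdisjoint : Disjoint (Icc 1 (min F (m - 1))) (Icc m F) :=
    disjoint_left.mpr fun j => by simp only [mem_Icc]; omega
  rw [hsplit, sum_union hdisjoint]
  congr 1
  · refine sum_congr rfl fun j hj => ?_
    rw [mem_Icc] at hj
    rw [typeDRootCount, if_neg (by omega)]
    congr 1
    omega
  · refine sum_nbij' (fun j => (j + 1).toNat) (fun j => (j : ℤ) - 1) ?_ ?_ ?_ ?_ ?_ <;>
      intro j hj <;> rw [mem_Icc] at hj
    · rw [mem_Icc]; omega
    · rw [mem_Icc]; omega
    · omega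
    · omega
    · rw [typeDRootCount, if_pos (by omega), ← Int.cast_natCast]
      congr 1
      omega

theorem two_mul_typeDRootCount {k : ℕ} (hk : k ≤ 2 * m) :
    2 * typeDRootCount m k = 2 * m - k + k % 2 + if k ≤ m then 2 else 0 := by
  unfold typeDRootCount
  split_ifs <;> omega

theorem two_mul_sum_typeDRootCount_mul {R : Type*} [CommRing R] (hm : 0 < m) (f : ℕ → R) :
    2 * ∑ k ∈ Ico 1 (2 * m), (typeDRootCount m k : R) * f k =
      ∑ k ∈ Ico 1 (2 * m), (2 * m - k : R) * f k
        + (∑ k ∈ Ico 1 (2 * m), f k - ∑ k ∈ Ico 1 m, f (2 * k))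
        + 2 * (∑ k ∈ Ico 1 m, f k + f m) := by
  have hle : ∑ k ∈ Ico 1 m, f k + f m = ∑ k ∈ Ico 1 (2 * m), if k ≤ m then f k else 0 := by
    rw [← sum_Ico_succ_top hm, ← sum_filter]
    congr 1
    ext k
    simp only [mem_filter, mem_Ico]
    omega
  rw [hle, ← sum_Ico_one_mod_two_mul f hm, mul_sum, mul_sum, ← sum_add_distrib,
    ← sum_add_distrib]
  refine sum_congr rfl fun k hk => ?_
  have hk' : k ≤ 2 * m := (mem_Ico.mp hk).2.le
  have hcount := congrArg (Nat.cast (R := R)) (two_mul_typeDRootCount hk')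
  push_cast [Nat.cast_sub hk'] at hcount
  rw [← mul_assoc, hcount]
  split_ifs <;> ring

theorem sum_typeDRootCount_mul_sq {K : Type*} [Field K] [CharZero K] (hm : 0 < m) :
    ∑ k ∈ Ico 1 (2 * m), (typeDRootCount m k : K) * (k : K) ^ 2 =
      (m : K) ^ 2 * (m + 1) * (2 * m + 1) / 3 := by
  have hcubic : ∑ k ∈ Ico 1 (2 * m), (2 * m - k : K) * (k : K) ^ 2 =
      2 * m * ∑ k ∈ Ico 1 (2 * m), (k : K) ^ 2 - ∑ k ∈ Ico 1 (2 * m), (k : K) ^ 3 := by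
    rw [mul_sum, ← sum_sub_distrib]
    exact sum_congr rfl fun k _ => by ring
  have heven : ∑ k ∈ Ico 1 m, ((2 * k : ℕ) : K) ^ 2 = 4 * ∑ k ∈ Ico 1 m, (k : K) ^ 2 := by
    rw [mul_sum]
    exact sum_congr rfl fun k _ => by push_cast; ring
  have hsum := two_mul_sum_typeDRootCount_mul hm fun k => (k : K) ^ 2
  simp only [hcubic, heven, sum_Ico_one_pow_two hm, sum_Ico_one_pow_two (by omega : 0 < 2 * m),
    sum_Ico_one_pow_three (by omega : 0 < 2 * m)] at hsum
  push_cast at hsum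
  linear_combination hsum / 2

theorem sum_typeDRootCount_mul_mul_eq_zero {R : Type*} [CommRing R] [NoZeroDivisors R]
    [CharZero R] (hm : 0 < m) {σ : ℕ → R} (hodd : ∀ k, 0 < k → k < 2 * m → σ (2 * m - k) = -σ k)
    (hdouble : ∀ k, σ (2 * k) = σ k + σ (k + m)) :
    ∑ k ∈ Ico 1 (2 * m), (typeDRootCount m k : R) * (k * σ k) = 0 := by
  have hσm : σ m = 0 := by
    have := hodd m hm (by omega)
    rwa [two_mul, Nat.add_sub_cancel, self_eq_neg] at this
  have hsymm : ∑ k ∈ Ico 1 (2 * m), (2 * m - k : R) * (k * σ k) = 0 := by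
    rw [← self_eq_neg, ← sum_neg_distrib, ← sum_Ico_one_reflect]
    refine sum_congr rfl fun k hk => ?_
    obtain ⟨hk0, hkm⟩ := mem_Ico.mp hk
    rw [hodd k hk0 hkm]
    push_cast [Nat.cast_sub hkm.le]
    ring
  have hupper : ∑ k ∈ Ico 1 m, (m - k : R) * σ (k + m) = -∑ k ∈ Ico 1 m, k * σ k := by
    rw [← sum_Ico_one_reflect, ← sum_neg_distrib]
    refine sum_congr rfl fun k hk => ?_
    obtain ⟨hk0, hkm⟩ := mem_Ico.mp hk
    rw [show m - k + m = 2 * m - k by omega, hodd k hk0 (by omega), Nat.cast_sub hkm.le]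
    ring
  have heven : ∑ k ∈ Ico 1 m, ((2 * k : ℕ) : R) * σ (2 * k) =
      2 * ∑ k ∈ Ico 1 m, k * σ k + ∑ k ∈ Ico 1 m, ((k + m : ℕ) : R) * σ (k + m)
        - ∑ k ∈ Ico 1 m, (m - k : R) * σ (k + m) := by
    rw [mul_sum, ← sum_add_distrib, ← sum_sub_distrib]
    refine sum_congr rfl fun k _ => ?_
    rw [hdouble]
    push_cast
    ring
  have hsum := two_mul_sum_typeDRootCount_mul hm fun k => (k : R) * σ k
  rw [hsymm, heven, hupper, sum_Ico_one_two_mul (fun k => (k : R) * σ k) hm, hσm] at hsum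
  refine (mul_eq_zero.mp ?_).resolve_left (two_ne_zero (α := R))
  linear_combination hsum

theorem typeDRootCount_add_reflect {k : ℕ} (hk0 : 0 < k) (hk : k < 2 * m) :
    typeDRootCount m k + typeDRootCount m (2 * m - k) =
      m + 1 + k % 2 + if k = m then 1 else 0 := by
  unfold typeDRootCount
  split_ifs <;> omega

theorem typeDRootCount_add_reflect_mul_mod {b k : ℕ} (h : (2 * m).Coprime b) (hk0 : 0 < k)
    (hk : k < 2 * m) :
    typeDRootCount m (k * b % (2 * m)) + typeDRootCount m (2 * m - k * b % (2 * m)) =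
      typeDRootCount m k + typeDRootCount m (2 * m - k) := by
  have hodd : b % 2 = 1 := Nat.odd_iff.mp (Nat.coprime_two_left.mp h.coprime_mul_right)
  have hparity : k * b % (2 * m) % 2 = k % 2 := by
    rw [Nat.mod_mul_right_mod, Nat.mul_mod, hodd, mul_one, Nat.mod_mod]
  have hm : m * b % (2 * m) = m := by
    rw [mul_comm 2 m, Nat.mul_mod_mul_left, hodd, mul_one]
  have hmid : k * b % (2 * m) = m ↔ k = m := by
    refine ⟨fun hk' => ?_, fun hk' => hk' ▸ hm⟩
    have hmod : k * b ≡ m * b [MOD 2 * m] := hk'.trans hm.symm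
    exact (hmod.cancel_right_of_coprime h).eq_of_lt_of_lt hk (by omega)
  rw [typeDRootCount_add_reflect (mul_mod_pos_of_coprime h hk0 hk) (Nat.mod_lt _ (by omega)),
    typeDRootCount_add_reflect hk0 hk, hparity]
  simp only [hmid]

section Coprime

variable {K : Type*} [Field K] [LinearOrder K] [IsStrictOrderedRing K] [FloorRing K] {b : ℕ}

theorem sum_typeDRootCount_mul_sawtooth_sq (h : (2 * m).Coprime b) :
    ∑ k ∈ Ico 1 (2 * m),
        (typeDRootCount m k : K) * sawtooth (((k * b : ℕ) : K) / (2 * m : ℕ)) ^ 2 =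
      ∑ k ∈ Ico 1 (2 * m), (typeDRootCount m k : K) * sawtooth ((k : K) / (2 * m : ℕ)) ^ 2 := by
  have hsymm {c : ℕ} (hc : (2 * m).Coprime c) (k : ℕ) (hk0 : 0 < k) (hk : k < 2 * m) :
      sawtooth ((((2 * m - k) * c : ℕ) : K) / (2 * m : ℕ)) ^ 2 =
        sawtooth (((k * c : ℕ) : K) / (2 * m : ℕ)) ^ 2 := by
    rw [sawtooth_sub_mul_div hc hk0 hk, neg_sq]
  set w : ℕ → K := fun k => typeDRootCount m k + typeDRootCount m (2 * m - k)
  have hinvariant : ∀ k ∈ Ico 1 (2 * m), w (k * b % (2 * m)) = w k := by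
    intro k hk
    obtain ⟨hk0, hk⟩ := mem_Ico.mp hk
    simp only [w]
    exact mod_cast typeDRootCount_add_reflect_mul_mod h hk0 hk
  refine mul_left_cancel₀ (two_ne_zero (α := K)) ?_
  calc
    _ = ∑ k ∈ Ico 1 (2 * m), w k * sawtooth (((k * b : ℕ) : K) / (2 * m : ℕ)) ^ 2 :=
      two_mul_sum_mul_of_reflect _ (hsymm h)
    _ = ∑ k ∈ Ico 1 (2 * m), w (k * b % (2 * m)) *
          sawtooth (((k * b % (2 * m) : ℕ) : K) / (2 * m : ℕ)) ^ 2 :=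
      sum_congr rfl fun k hk => by rw [hinvariant k hk, sawtooth_natCast_mod_div]
    _ = ∑ k ∈ Ico 1 (2 * m), w k * sawtooth ((k : K) / (2 * m : ℕ)) ^ 2 :=
      sum_Ico_one_mul_mod h fun k => w k * sawtooth ((k : K) / (2 * m : ℕ)) ^ 2
    _ = _ := by
      refine (two_mul_sum_mul_of_reflect _ fun k hk0 hk => ?_).symm
      simpa only [mul_one] using hsymm (Nat.coprime_one_right _) k hk0 hk

theorem sum_typeDRootCount_mul_sawtooth (hm : 0 < m) (h : (2 * m).Coprime b) :
    ∑ k ∈ Ico 1 (2 * m),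
      (typeDRootCount m k : K) * (k * sawtooth (((k * b : ℕ) : K) / (2 * m : ℕ))) = 0 :=
  sum_typeDRootCount_mul_mul_eq_zero hm (fun _ => sawtooth_sub_mul_div h)
    (sawtooth_two_mul_mul_div hm (Nat.coprime_two_left.mp h.coprime_mul_right))

theorem sum_typeDRootCount_mul_natCast_div_mul (hm : 0 < m) (h : (2 * m).Coprime b) :
    ∑ k ∈ Ico 1 (2 * m), (typeDRootCount m k : K) *
        (((k * b / (2 * m) : ℕ) : K) * ((k * b / (2 * m) : ℕ) + 1)) =
      ((b : K) / (2 * m : ℕ)) ^ 2 * ∑ k ∈ Ico 1 (2 * m), (typeDRootCount m k : K) * (k : K) ^ 2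
        + ∑ k ∈ Ico 1 (2 * m),
            (typeDRootCount m k : K) * (sawtooth ((k : K) / (2 * m : ℕ)) ^ 2 - 1 / 4) := by
  calc
    _ = ((b : K) / (2 * m : ℕ)) ^ 2 * ∑ k ∈ Ico 1 (2 * m), (typeDRootCount m k : K) * (k : K) ^ 2
          - 2 * ((b : K) / (2 * m : ℕ)) * ∑ k ∈ Ico 1 (2 * m),
              (typeDRootCount m k : K) * (k * sawtooth (((k * b : ℕ) : K) / (2 * m : ℕ)))
          + (∑ k ∈ Ico 1 (2 * m),
              (typeDRootCount m k : K) * sawtooth (((k * b : ℕ) : K) / (2 * m : ℕ)) ^ 2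
            - ∑ k ∈ Ico 1 (2 * m), (typeDRootCount m k : K) * (1 / 4)) := by
      rw [mul_sum, mul_sum, ← sum_sub_distrib, ← sum_sub_distrib, ← sum_add_distrib]
      refine sum_congr rfl fun k _ => ?_
      rw [natCast_div_mul_natCast_div_add_one, Nat.cast_mul k b]
      ring
    _ = _ := by
      rw [sum_typeDRootCount_mul_sawtooth hm h, sum_typeDRootCount_mul_sawtooth_sq h,
        ← sum_sub_distrib]
      simp only [mul_sub, mul_zero, sub_zero]

theorem sum_typeDRootCount_mul_sum_Icc_div (hm : 0 < m) (h : (2 * m).Coprime b) :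
    ∑ k ∈ Ico 1 (2 * m), (typeDRootCount m k : K) * ∑ t ∈ Icc 1 (k * b / (2 * m)), (t : K) =
      (m + 1) * ((b : K) ^ 2 - 1) * (2 * m + 1) / 24 := by
  have hm' : (m : K) ≠ 0 := Nat.cast_ne_zero.mpr hm.ne'
  have hb := sum_typeDRootCount_mul_natCast_div_mul (K := K) hm h
  have hone := sum_typeDRootCount_mul_natCast_div_mul (K := K) hm (Nat.coprime_one_right _)
  have hzero : ∑ k ∈ Ico 1 (2 * m), (typeDRootCount m k : K) *
      (((k * 1 / (2 * m) : ℕ) : K) * ((k * 1 / (2 * m) : ℕ) + 1)) = 0 :=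
    sum_eq_zero fun k hk => by
      rw [mul_one, Nat.div_eq_of_lt (mem_Ico.mp hk).2, Nat.cast_zero, zero_mul, mul_zero]
  rw [hzero] at hone
  have hdiff : ∑ k ∈ Ico 1 (2 * m), (typeDRootCount m k : K) *
        (((k * b / (2 * m) : ℕ) : K) * ((k * b / (2 * m) : ℕ) + 1)) =
      ((b : K) ^ 2 - 1) / (2 * m : ℕ) ^ 2 * (m ^ 2 * (m + 1) * (2 * m + 1) / 3) := by
    rw [← sum_typeDRootCount_mul_sq hm]
    push_cast at hb hone ⊢
    linear_combination hb - hone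
  simp only [sum_Icc_one_id, mul_div_assoc']
  rw [← sum_div, hdiff]
  push_cast
  field_simp
  ring

end Coprime

end TypeD

/-- Floor/ceiling sum identity in type `D_n`: with `F = ⌊i(2n-2)/b⌋`,
`∑_{i=1}^{b-1} (b-i) (∑_{j=1}^{min(F,n-2)} ⌊(j+1)/2⌋ + ∑_{j=n-2}^{F-1} ⌈(j+3)/2⌉)
  = n(b²-1)(2n-1)/24`, where the second inner sum is empty when `F - 1 < n - 2`. -/
theorem floor_sum_identity_typeD (n b : ℕ) (hn : 2 ≤ n) (hb : 1 ≤ b)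
    (h : Nat.Coprime (2 * n - 2) b) :
    ∑ i ∈ Finset.Icc 1 (b - 1),
        ((b : ℚ) - i) *
          ((∑ j ∈ Finset.Icc 1 (min (i * (2 * n - 2) / b) (n - 2)), (((j + 1) / 2 : ℕ) : ℚ))
            + ∑ j ∈ Finset.Icc ((n : ℤ) - 2) (((i * (2 * n - 2) / b : ℕ) : ℤ) - 1),
                (((j + 4) / 2 : ℤ) : ℚ))
      = (n : ℚ) * ((b : ℚ) ^ 2 - 1) * (2 * (n : ℚ) - 1) / 24 := by
  obtain ⟨m, rfl⟩ := Nat.exists_eq_add_of_le' (by omega : 1 ≤ n)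
  have hN : 2 * (m + 1) - 2 = 2 * m := by omega
  rw [hN] at h ⊢
  calc
    _ = ∑ i ∈ Finset.Icc 1 (b - 1), ((b : ℚ) - i) *
          ∑ j ∈ Finset.Icc 1 (i * (2 * m) / b), (typeDRootCount m (2 * m - j) : ℚ) := by
      refine Finset.sum_congr rfl fun i hi => ?_
      have hF : i * (2 * m) / b ≤ 2 * m :=
        Nat.div_le_of_le_mul (Nat.mul_le_mul_right _ (by rw [Finset.mem_Icc] at hi; omega))
      rw [← sum_floor_add_sum_ceil_eq_sum_typeDRootCount (by omega) hF]
      have hbot : ((m + 1 : ℕ) : ℤ) - 2 = (m : ℤ) - 1 := by omega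
      rw [hbot, Nat.add_sub_add_right m 1 1]
    _ = ∑ k ∈ Finset.Ico 1 (2 * m), (typeDRootCount m k : ℚ) *
          ∑ t ∈ Finset.Icc 1 (k * b / (2 * m)), (t : ℚ) :=
      sum_sub_mul_sum_Icc_div (fun k => (typeDRootCount m k : ℚ)) (2 * m) b
    _ = (m + 1) * ((b : ℚ) ^ 2 - 1) * (2 * m + 1) / 24 :=
      sum_typeDRootCount_mul_sum_Icc_div (by omega) h
    _ = _ := by push_cast; ring
end

section
/- For every positive integer n, the number of nonnegative integer solutions (x_0, x_1, ..., x_n) to x_0 + x_1 + ... + x_n = b equals binomial(n+b, b), and hence the number of (n+1, b)-cores for gcd(n+1,b)=1 equals (1/(n+1)) * binomial(n+b, b). -/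
/-!
The integers `j + (colLen 0 - colLen j)` are exactly the natural numbers that are not first-column
hook lengths of `μ`, and the hook lengths of `μ` are the positive differences between a first-column
hook length and such an integer. Hence `μ ↦ {j + (colLen 0 - colLen j)}` identifies `(a, b)`-cores
with the sets of naturals that contain `0` and are stable under adding `a` and `b`.

Such a set is determined by its least elements `m r` in the residue classes `r` modulo `a`, and
`m r + b = m (r + b) + a * x r` with `x r ≥ 0` and `∑ x r = b`. Conversely, a composition
`x : ZMod a → ℕ` of `b` determines `m` up to an additive constant; making its minimum `0` amounts to
translating `x` by the residue at which the minimum is attained, a minimum which is unique because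
the values of `m` are pairwise incongruent modulo `a`. So each orbit of compositions under
translation consists of `a` elements and contains a single one coming from a core.
-/

/-- The hook length of the cell `(i, j)` in a Young diagram. -/
def YoungDiagram.hookLength (μ : YoungDiagram) (i j : ℕ) : ℕ :=
  (μ.rowLen i - j) + (μ.colLen j - i) - 1

/-- A Young diagram is an `a`-core if none of its hook lengths is divisible by `a`. -/
def YoungDiagram.IsCore (μ : YoungDiagram) (a : ℕ) : Prop :=
  ∀ i j : ℕ, (i, j) ∈ μ → ¬ a ∣ μ.hookLength i j

namespace SimultaneousCores

theorem add_nsmul_mem {M : Type*} [AddMonoid M] {T : Set M} {a t : M}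
    (hT : Set.MapsTo (· + a) T T) (ht : t ∈ T) (k : ℕ) : t + k • a ∈ T := by
  simpa only [add_right_iterate] using hT.iterate k ht

section YoungDiagram

variable {μ : YoungDiagram} {i j : ℕ}

theorem lt_rowLen_iff_lt_colLen : j < μ.rowLen i ↔ i < μ.colLen j := by
  rw [← YoungDiagram.mem_iff_lt_rowLen, YoungDiagram.mem_iff_lt_colLen]

theorem exists_colLen_eq {f : ℕ → ℕ} (hf : Antitone f) {N : ℕ} (hN : f N = 0) :
    ∃ μ : YoungDiagram, μ.colLen = f := by
  let μ : YoungDiagram :=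
    { cells := (Finset.range (f 0) ×ˢ Finset.range N).filter fun c => c.1 < f c.2
      isLowerSet := by
        rintro ⟨i, j⟩ ⟨i', j'⟩ ⟨hi : i' ≤ i, hj : j' ≤ j⟩ hc
        simp only [Finset.coe_filter, Finset.mem_product, Finset.mem_range,
          Set.mem_ofPred_eq] at hc ⊢
        have := hf hj
        omega }
  have mem_iff (i j : ℕ) : (i, j) ∈ μ ↔ i < f j := by
    simp only [← YoungDiagram.mem_cells, μ, Finset.mem_filter, Finset.mem_product,
      Finset.mem_range, and_iff_right_iff_imp]
    refine fun hij => ⟨hij.trans_le (hf j.zero_le), ?_⟩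
    by_contra! hNj
    have := hf hNj
    omega
  refine ⟨μ, funext fun j => eq_of_forall_lt_iff fun i => ?_⟩
  rw [← YoungDiagram.mem_iff_lt_colLen, mem_iff]

/-- The `j`-th natural number that is not a first-column hook length of `μ`, in increasing order:
the position of the `j`-th empty place of the abacus (beta-set) of `μ`. -/
def gap (μ : YoungDiagram) (j : ℕ) : ℕ := j + (μ.colLen 0 - μ.colLen j)

theorem gap_zero (μ : YoungDiagram) : gap μ 0 = 0 := by simp [gap]

theorem gap_add_colLen (μ : YoungDiagram) (j : ℕ) : gap μ j + μ.colLen j = j + μ.colLen 0 := by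
  have := μ.colLen_anti 0 j j.zero_le
  unfold gap
  omega

theorem gap_strictMono (μ : YoungDiagram) : StrictMono (gap μ) := by
  refine strictMono_nat_of_lt_succ fun j => ?_
  have hj := gap_add_colLen μ j
  have hj' := gap_add_colLen μ (j + 1)
  have := μ.colLen_anti j (j + 1) j.le_succ
  omega

theorem hookLength_add_eq (hij : (i, j) ∈ μ) :
    μ.hookLength i j + (i + j + 1) = μ.rowLen i + μ.colLen j := by
  have hcol := YoungDiagram.mem_iff_lt_colLen.1 hij
  have hrow := YoungDiagram.mem_iff_lt_rowLen.1 hij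
  unfold YoungDiagram.hookLength
  omega

theorem gap_add_hookLength (hij : (i, j) ∈ μ) :
    gap μ j + μ.hookLength i j = μ.hookLength i 0 := by
  have hi : (i, 0) ∈ μ := μ.up_left_mem le_rfl j.zero_le hij
  have := hookLength_add_eq hij
  have := hookLength_add_eq hi
  have := gap_add_colLen μ j
  omega

theorem gap_lt_hookLength_iff (hi : (i, 0) ∈ μ) : gap μ j < μ.hookLength i 0 ↔ (i, j) ∈ μ := by
  have := hookLength_add_eq hi
  have := gap_add_colLen μ j
  have := lt_rowLen_iff_lt_colLen (μ := μ) (i := i) (j := j)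
  rw [YoungDiagram.mem_iff_lt_colLen]
  omega

theorem hookLength_notMem_range_gap (hi : (i, 0) ∈ μ) :
    μ.hookLength i 0 ∉ Set.range (gap μ) := by
  rintro ⟨j, hj⟩
  have := hookLength_add_eq hi
  have := gap_add_colLen μ j
  have := lt_rowLen_iff_lt_colLen (μ := μ) (i := i) (j := j)
  omega

theorem exists_hookLength_eq {v : ℕ} (hv : v ∉ Set.range (gap μ)) :
    ∃ i, (i, 0) ∈ μ ∧ μ.hookLength i 0 = v := by
  have gap_ne (j : ℕ) : gap μ j ≠ v := fun hj => hv ⟨j, hj⟩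
  have hv₀ : gap μ 0 < v := lt_of_le_of_ne (by simp [gap_zero]) (gap_ne 0)
  obtain ⟨j, hj, hj_le⟩ := (gap_strictMono μ).exists_between_of_tendsto_atTop
    (gap_strictMono μ).tendsto_atTop hv₀
  have hj' : v < gap μ (j + 1) := lt_of_le_of_ne hj_le (gap_ne (j + 1)).symm
  have hgap := gap_add_colLen μ j
  have hgap' := gap_add_colLen μ (j + 1)
  -- As `v` lies strictly between consecutive gaps, the row `i` with `v + i = j + colLen 0` ends in
  -- column `j`.
  obtain ⟨i, hi⟩ : ∃ i, v + i = j + μ.colLen 0 := Nat.le.dest (by omega)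
  have hrow : μ.rowLen i = j + 1 := by
    have := lt_rowLen_iff_lt_colLen (μ := μ) (i := i) (j := j)
    have := lt_rowLen_iff_lt_colLen (μ := μ) (i := i) (j := j + 1)
    omega
  have hi₀ : (i, 0) ∈ μ := by rw [YoungDiagram.mem_iff_lt_rowLen]; omega
  have := hookLength_add_eq hi₀
  exact ⟨i, hi₀, by omega⟩

theorem isCore_iff_mapsTo_range_gap {a : ℕ} :
    μ.IsCore a ↔ Set.MapsTo (· + a) (Set.range (gap μ)) (Set.range (gap μ)) := by
  constructor
  · rintro hμ _ ⟨j, rfl⟩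
    by_contra hgap
    obtain ⟨i, hi, hook_eq : μ.hookLength i 0 = gap μ j + a⟩ := exists_hookLength_eq hgap
    have hne : gap μ j ≠ μ.hookLength i 0 := fun h =>
      hookLength_notMem_range_gap hi ⟨j, h⟩
    have hij : (i, j) ∈ μ := (gap_lt_hookLength_iff hi).1 (by omega)
    have := gap_add_hookLength hij
    exact hμ i j hij (dvd_of_eq (by omega))
  · rintro hmaps i j hij ⟨k, hk⟩
    have hi : (i, 0) ∈ μ := μ.up_left_mem le_rfl j.zero_le hij
    apply hookLength_notMem_range_gap hi
    rw [← gap_add_hookLength hij, hk, mul_comm, ← smul_eq_mul]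
    exact add_nsmul_mem hmaps ⟨j, rfl⟩ k

theorem range_gap_injective : Function.Injective fun μ => Set.range (gap μ) := by
  intro μ ν h
  have hgap (j : ℕ) : gap μ j = gap ν j :=
    congrFun ((gap_strictMono μ).range_inj (gap_strictMono ν) |>.1 h) j
  have colLen_eq_zero {μ : YoungDiagram} {j : ℕ} (hj : μ.rowLen 0 ≤ j) : μ.colLen j = 0 := by
    have := lt_rowLen_iff_lt_colLen (μ := μ) (i := 0) (j := j)
    omega
  have hcol₀ : μ.colLen 0 = ν.colLen 0 := by
    have hμ := gap_add_colLen μ (max (μ.rowLen 0) (ν.rowLen 0))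
    have hν := gap_add_colLen ν (max (μ.rowLen 0) (ν.rowLen 0))
    rw [colLen_eq_zero (le_max_left _ _)] at hμ
    rw [colLen_eq_zero (le_max_right _ _), ← hgap] at hν
    omega
  refine SetLike.ext fun ⟨i, j⟩ => ?_
  have hμ := gap_add_colLen μ j
  have hν := gap_add_colLen ν j
  have := hgap j
  rw [YoungDiagram.mem_iff_lt_colLen, YoungDiagram.mem_iff_lt_colLen]
  omega

theorem exists_strictMono_range_eq {T : Set ℕ} (hT : ∀ᶠ t in Filter.atTop, t ∈ T) :
    ∃ f : ℕ → ℕ, StrictMono f ∧ Set.range f = T ∧ ∃ N c, ∀ k, f (c + k) = N + k := by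
  classical
  obtain ⟨N, hN⟩ := Filter.eventually_atTop.1 hT
  have hinf : (Set.ofPred (· ∈ T)).Infinite := Nat.frequently_atTop_iff_infinite.1 hT.frequently
  refine ⟨Nat.nth (· ∈ T), Nat.nth_strictMono hinf, Nat.range_nth_of_infinite hinf,
    N, Nat.count (· ∈ T) N, fun k => ?_⟩
  have count_eq : Nat.count (· ∈ T) (N + k) = Nat.count (· ∈ T) N + k := by
    rw [Nat.count_add, Nat.count_of_forall fun l _ => hN (N + l) (N.le_add_right l)]
  rw [← count_eq, Nat.nth_count (hN _ (N.le_add_right k))]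

theorem exists_range_gap_eq {T : Set ℕ} (h₀ : 0 ∈ T) (hT : ∀ᶠ t in Filter.atTop, t ∈ T) :
    ∃ μ : YoungDiagram, Set.range (gap μ) = T := by
  obtain ⟨f, hf, rfl, N, c, hc⟩ := exists_strictMono_range_eq hT
  have hf₀ : f 0 = 0 := by
    obtain ⟨k, hk⟩ := h₀
    exact Nat.le_zero.1 ((hf.monotone k.zero_le).trans_eq hk)
  have le_f (j : ℕ) : j ≤ f j := hf.le_apply
  have sub_mono : Monotone fun j => f j - j := monotone_nat_of_le_succ fun j => by
    have := hf j.lt_add_one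
    omega
  have sub_le (j : ℕ) : f j - j ≤ N - c := by
    have hmono := sub_mono (j.le_add_left c)
    have := hc j
    simp only at hmono
    omega
  obtain ⟨μ, hμ⟩ := exists_colLen_eq (f := fun j => N - c - (f j - j)) (N := c)
    (fun _ _ hij => Nat.sub_le_sub_left (sub_mono hij) _)
    (by have : f c = N := hc 0; rw [this, Nat.sub_self])
  refine ⟨μ, congrArg Set.range (funext fun j => ?_)⟩
  have := le_f j
  have := sub_le j
  simp only [gap, hμ]
  omega

end YoungDiagram

section ZMod

variable {a b : ℕ} [NeZero a]

theorem exists_nsmul_natCast_eq (hab : a.Coprime b) (r : ZMod a) :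
    ∃ k : ℕ, k • (b : ZMod a) = r := by
  refine ⟨(r * (b : ZMod a)⁻¹).val, ?_⟩
  rw [nsmul_eq_mul, ZMod.natCast_zmod_val, mul_assoc, mul_comm _ (b : ZMod a),
    ZMod.coe_mul_inv_eq_one b hab.symm, mul_one]

theorem eq_apply_zero_of_periodic {α : Type*} (hab : a.Coprime b) {f : ZMod a → α}
    (hf : Function.Periodic f (b : ZMod a)) (r : ZMod a) : f r = f 0 := by
  obtain ⟨k, rfl⟩ := exists_nsmul_natCast_eq hab r
  exact hf.nsmul_eq k

theorem sum_range_natCast {G : Type*} [AddCommMonoid G] (f : ZMod a → G) :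
    ∑ k ∈ Finset.range a, f k = ∑ r, f r :=
  Finset.sum_nbij' (fun k => (k : ZMod a)) ZMod.val (fun _ _ => Finset.mem_univ _)
    (fun r _ => Finset.mem_range.2 r.val_lt)
    (fun _ hk => ZMod.val_cast_of_lt (Finset.mem_range.1 hk))
    (fun r _ => r.natCast_zmod_val) fun _ _ => rfl

theorem exists_add_one_eq_add {G : Type*} [AddCommMonoid G] {f : ZMod a → G}
    (hf : ∑ r, f r = 0) : ∃ F : ZMod a → G, ∀ r, F (r + 1) = F r + f r := by
  let S (k : ℕ) : G := ∑ i ∈ Finset.range k, f i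
  have periodic_S : Function.Periodic S a := fun k => by
    simp only [S, add_comm k, Finset.sum_range_add, Nat.cast_add, ZMod.natCast_self, zero_add,
      sum_range_natCast, hf]
  refine ⟨fun r => S r.val, fun r => ?_⟩
  have hval : (r + 1).val = (r.val + 1) % a := by
    rw [← ZMod.val_natCast, Nat.cast_add_one, ZMod.natCast_zmod_val]
  simp only [hval, periodic_S.map_mod_nat]
  simp only [S, Finset.sum_range_succ, ZMod.natCast_zmod_val]

theorem exists_add_unit_eq_add {G : Type*} [AddCommMonoid G] {f : ZMod a → G} (u : (ZMod a)ˣ)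
    (hf : ∑ r, f r = 0) : ∃ F : ZMod a → G, ∀ r, F (r + u) = F r + f r := by
  obtain ⟨F, hF⟩ := exists_add_one_eq_add (f := fun r : ZMod a => f (r * u))
    ((Equiv.sum_comp u.mulRight f).trans hf)
  refine ⟨fun r => F (r * ↑u⁻¹), fun r => ?_⟩
  simpa [add_mul] using hF (r * ↑u⁻¹)

end ZMod

/-- Normalised semimodules over the numerical semigroup generated by `a` and `b`: sets of natural
numbers containing `0` and stable under adding `a` and `b`. -/
structure IsSemimodule (a b : ℕ) (T : Set ℕ) : Prop where
  zero_mem : 0 ∈ T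
  mapsTo_left : Set.MapsTo (· + a) T T
  mapsTo_right : Set.MapsTo (· + b) T T

/-- The least element of `T` congruent to `r` modulo `a` (the Apéry set of `T`, indexed by residue
class); it is the junk value `0` when `T` misses the class of `r`. -/
noncomputable def apery (a : ℕ) (T : Set ℕ) (r : ZMod a) : ℕ :=
  sInf {t | t ∈ T ∧ (t : ZMod a) = r}

/-- The amount, in multiples of `a`, by which adding `b` to the least element of `T` congruent to
`r` overshoots the least element of `T` congruent to `r + b`. -/
noncomputable def aperyStep (a b : ℕ) (T : Set ℕ) (r : ZMod a) : ℕ :=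
  (apery a T r + b - apery a T (r + b)) / a

section Apery

variable {a b : ℕ} {T T' : Set ℕ}

theorem apery_natCast_le {t : ℕ} (ht : t ∈ T) : apery a T t ≤ t := Nat.sInf_le ⟨ht, rfl⟩

theorem apery_zero (h₀ : 0 ∈ T) : apery a T 0 = 0 := by
  simpa using apery_natCast_le (a := a) h₀

theorem apery_setOf_le {m : ZMod a → ℕ} (hm : ∀ r, (m r : ZMod a) = r) :
    apery a {t | m t ≤ t} = m :=
  funext fun r => IsLeast.csInf_eq
    ⟨⟨by simp only [Set.mem_ofPred_eq, hm, le_refl], hm r⟩, by rintro t ⟨ht, rfl⟩; exact ht⟩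

theorem isSemimodule_setOf_le {m : ZMod a → ℕ} (h₀ : m 0 = 0) (hb : ∀ r, m (r + b) ≤ m r + b) :
    IsSemimodule a b {t | m t ≤ t} where
  zero_mem := by simp [h₀]
  mapsTo_left t (ht : m t ≤ t) := by
    simpa using ht.trans (t.le_add_right a)
  mapsTo_right t (ht : m t ≤ t) := by
    simpa using (hb t).trans (Nat.add_le_add_right ht b)

variable [NeZero a]

namespace IsSemimodule

theorem apery_spec (hT : IsSemimodule a b T) (hab : a.Coprime b) (r : ZMod a) :
    apery a T r ∈ T ∧ (apery a T r : ZMod a) = r := by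
  have hne : {t | t ∈ T ∧ (t : ZMod a) = r}.Nonempty := by
    obtain ⟨k, hk⟩ := exists_nsmul_natCast_eq hab r
    exact ⟨0 + k • b, add_nsmul_mem hT.mapsTo_right hT.zero_mem k, by simpa using hk⟩
  exact Nat.sInf_mem hne

theorem apery_mem (hT : IsSemimodule a b T) (hab : a.Coprime b) (r : ZMod a) : apery a T r ∈ T :=
  (hT.apery_spec hab r).1

theorem natCast_apery (hT : IsSemimodule a b T) (hab : a.Coprime b) (r : ZMod a) :
    (apery a T r : ZMod a) = r :=
  (hT.apery_spec hab r).2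

theorem mem_iff_apery_le (hT : IsSemimodule a b T) (hab : a.Coprime b) {t : ℕ} :
    t ∈ T ↔ apery a T t ≤ t := by
  refine ⟨apery_natCast_le, fun hle => ?_⟩
  have hmod : apery a T t ≡ t [MOD a] :=
    (ZMod.natCast_eq_natCast_iff _ _ _).1 (hT.natCast_apery hab t)
  obtain ⟨k, hk⟩ := (Nat.modEq_iff_dvd' hle).1 hmod
  have := add_nsmul_mem hT.mapsTo_left (hT.apery_mem hab t) k
  rwa [smul_eq_mul, mul_comm, ← hk, Nat.add_sub_cancel' hle] at this

theorem eq_of_apery_eq (hT : IsSemimodule a b T) (hT' : IsSemimodule a b T') (hab : a.Coprime b)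
    (h : apery a T = apery a T') : T = T' := by
  ext t
  rw [hT.mem_iff_apery_le hab, hT'.mem_iff_apery_le hab, h]

theorem eventually_mem (hT : IsSemimodule a b T) (hab : a.Coprime b) :
    ∀ᶠ t in Filter.atTop, t ∈ T := by
  refine Filter.eventually_atTop.2 ⟨∑ r, apery a T r, fun t ht => ?_⟩
  exact (hT.mem_iff_apery_le hab).2
    ((Finset.single_le_sum_of_canonicallyOrdered (Finset.mem_univ (t : ZMod a))).trans ht)

theorem apery_add_le (hT : IsSemimodule a b T) (hab : a.Coprime b) (r : ZMod a) :
    apery a T (r + b) ≤ apery a T r + b := by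
  simpa [hT.natCast_apery hab] using
    apery_natCast_le (a := a) (hT.mapsTo_right (hT.apery_mem hab r))

theorem apery_add_add_aperyStep (hT : IsSemimodule a b T) (hab : a.Coprime b) (r : ZMod a) :
    apery a T (r + b) + a * aperyStep a b T r = apery a T r + b := by
  have hle := hT.apery_add_le hab r
  have hmod : apery a T (r + b) ≡ apery a T r + b [MOD a] := by
    rw [← ZMod.natCast_eq_natCast_iff, Nat.cast_add, hT.natCast_apery hab, hT.natCast_apery hab]
  rw [aperyStep, Nat.mul_div_cancel' ((Nat.modEq_iff_dvd' hle).1 hmod), Nat.add_sub_cancel' hle]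

theorem sum_aperyStep (hT : IsSemimodule a b T) (hab : a.Coprime b) :
    ∑ r, aperyStep a b T r = b := by
  have hshift : ∑ r : ZMod a, apery a T (r + b) = ∑ r, apery a T r :=
    Equiv.sum_comp (Equiv.addRight (b : ZMod a)) (apery a T)
  have hsum := Finset.sum_congr rfl fun r (_ : r ∈ Finset.univ) =>
    hT.apery_add_add_aperyStep hab r
  rw [Finset.sum_add_distrib, Finset.sum_add_distrib, hshift, ← Finset.mul_sum, Finset.sum_const,
    Finset.card_univ, ZMod.card, smul_eq_mul, Nat.add_left_cancel_iff] at hsum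
  exact Nat.eq_of_mul_eq_mul_left (NeZero.pos a) hsum

theorem apery_sub_eq_of_aperyStep_sub_eq (hT : IsSemimodule a b T) (hT' : IsSemimodule a b T')
    (hab : a.Coprime b) {s s' : ZMod a}
    (h : ∀ r, aperyStep a b T (r - s) = aperyStep a b T' (r - s')) (r : ZMod a) :
    apery a T (r - s) = apery a T' (r - s') := by
  let D (r : ZMod a) : ℤ := apery a T (r - s) - apery a T' (r - s')
  have D_periodic : Function.Periodic D b := fun r => by
    have hstep := hT.apery_add_add_aperyStep hab (r - s)
    have hstep' := hT'.apery_add_add_aperyStep hab (r - s')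
    rw [sub_add_eq_add_sub] at hstep hstep'
    rw [h] at hstep
    simp only [D]
    omega
  have D_const := eq_apply_zero_of_periodic hab D_periodic
  have D_nonpos : D 0 ≤ 0 := by
    rw [← D_const s]
    simp [D, apery_zero hT.zero_mem]
  have D_nonneg : 0 ≤ D 0 := by
    rw [← D_const s']
    simp [D, apery_zero hT'.zero_mem]
  have : D r = 0 := (D_const r).trans (le_antisymm D_nonpos D_nonneg)
  exact_mod_cast sub_eq_zero.1 this

end IsSemimodule

/-- If `M ≥ 0` and `M 0 = 0`, then `M` is the Apéry function of a semimodule with steps `x`. -/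
theorem exists_residue_potential (hab : a.Coprime b) {x : ZMod a → ℕ} (hx : ∑ r, x r = b) :
    ∃ M : ZMod a → ℤ, (∀ r, (M r : ZMod a) = r) ∧ ∀ r, M (r + b) + a * x r = M r + b := by
  have hsum : ∑ r : ZMod a, ((b : ℤ) - a * x r) = 0 := by
    simp [Finset.sum_sub_distrib, ← Finset.mul_sum, ← Nat.cast_sum, hx, ZMod.card]
  obtain ⟨F, hF⟩ := exists_add_unit_eq_add (ZMod.unitOfCoprime b hab.symm) hsum
  rw [ZMod.coe_unitOfCoprime] at hF
  have periodic_cast : Function.Periodic (fun r => (F r : ZMod a) - r) b := fun r => by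
    simp only [hF]
    push_cast
    rw [ZMod.natCast_self]
    ring
  refine ⟨fun r => F r - F 0, fun r => ?_, fun r => ?_⟩
  · have := eq_apply_zero_of_periodic hab periodic_cast r
    push_cast
    linear_combination this
  · linear_combination hF r

theorem exists_isSemimodule_aperyStep_eq (hab : a.Coprime b) {x : ZMod a → ℕ}
    (hx : ∑ r, x r = b) :
    ∃ T, IsSemimodule a b T ∧ ∃ s, ∀ r, aperyStep a b T (r - s) = x r := by
  obtain ⟨M, hM_cast, hM_step⟩ := exists_residue_potential hab hx
  obtain ⟨s, hs⟩ := Finite.exists_min M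
  choose m hm using fun r => Int.le.dest (hs (r + s))
  have m_zero : m 0 = 0 := by simpa using hm 0
  have m_cast (r : ZMod a) : (m r : ZMod a) = r := by
    have := congrArg (Int.cast : ℤ → ZMod a) (hm r)
    push_cast [hM_cast] at this
    linear_combination this
  have m_step (r : ZMod a) : m (r + b) + a * x (r + s) = m r + b := by
    have hstep := hM_step (r + s)
    rw [add_right_comm, ← hm, ← hm] at hstep
    zify
    linear_combination hstep
  have hT : IsSemimodule a b {t | m t ≤ t} :=
    isSemimodule_setOf_le m_zero fun r => (Nat.le_add_right _ _).trans_eq (m_step r)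
  refine ⟨_, hT, s, fun r => Nat.eq_of_mul_eq_mul_left (NeZero.pos a) ?_⟩
  have hstep := hT.apery_add_add_aperyStep hab (r - s)
  rw [apery_setOf_le m_cast, ← m_step, sub_add_cancel] at hstep
  exact Nat.add_left_cancel hstep

theorem card_isSemimodule_mul (hab : a.Coprime b) :
    Nat.card {T // IsSemimodule a b T} * a = Nat.card {x : ZMod a → ℕ // ∑ r, x r = b} := by
  let Φ (p : {T // IsSemimodule a b T} × ZMod a) : {x : ZMod a → ℕ // ∑ r, x r = b} :=
    ⟨fun r => aperyStep a b p.1 (r - p.2),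
      (Equiv.sum_comp (Equiv.subRight p.2) (aperyStep a b p.1)).trans (p.1.2.sum_aperyStep hab)⟩
  have Φ_injective : Function.Injective Φ := by
    rintro ⟨⟨T, hT⟩, s⟩ ⟨⟨T', hT'⟩, s'⟩ h
    have hapery := hT.apery_sub_eq_of_aperyStep_sub_eq hT' hab (congrFun (congrArg Subtype.val h))
    have hs : s = s' := by
      have hcast := hT'.natCast_apery hab (s - s')
      rw [← hapery, sub_self, apery_zero hT.zero_mem, Nat.cast_zero] at hcast
      exact sub_eq_zero.1 hcast.symm
    subst hs
    have : T = T' := hT.eq_of_apery_eq hT' hab <| funext fun r => by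
      simpa using hapery (r + s)
    subst this
    rfl
  have Φ_surjective : Function.Surjective Φ := by
    rintro ⟨x, hx⟩
    obtain ⟨T, hT, s, hstep⟩ := exists_isSemimodule_aperyStep_eq hab hx
    exact ⟨(⟨T, hT⟩, s), Subtype.ext (funext hstep)⟩
  rw [← Nat.card_eq_of_bijective Φ ⟨Φ_injective, Φ_surjective⟩, Nat.card_prod, Nat.card_zmod]

theorem card_cores_eq_card_isSemimodule (hab : a.Coprime b) :
    Nat.card {μ : YoungDiagram | μ.IsCore a ∧ μ.IsCore b} =
      Nat.card {T // IsSemimodule a b T} := by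
  have isSemimodule_iff (μ : YoungDiagram) :
      IsSemimodule a b (Set.range (gap μ)) ↔ μ.IsCore a ∧ μ.IsCore b := by
    rw [isCore_iff_mapsTo_range_gap, isCore_iff_mapsTo_range_gap]
    exact ⟨fun h => ⟨h.mapsTo_left, h.mapsTo_right⟩, fun h => ⟨⟨0, gap_zero μ⟩, h.1, h.2⟩⟩
  refine Nat.card_eq_of_bijective
    (fun μ => ⟨Set.range (gap μ.1), (isSemimodule_iff μ.1).2 μ.2⟩) ⟨fun μ ν h => ?_, ?_⟩
  · exact Subtype.ext (range_gap_injective (congrArg Subtype.val h))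
  · rintro ⟨T, hT⟩
    obtain ⟨μ, rfl⟩ := exists_range_gap_eq hT.zero_mem (hT.eventually_mem hab)
    exact ⟨⟨μ, (isSemimodule_iff μ).1 hT⟩, rfl⟩

end Apery

theorem card_sum_eq (ι : Type*) [Fintype ι] (b : ℕ) :
    Nat.card {x : ι → ℕ // ∑ i, x i = b} = (Fintype.card ι).multichoose b := by
  classical
  rw [← Nat.card_congr (Sym.equivNatSumOfFintype ι b), Nat.card_eq_fintype_card,
    Sym.card_sym_eq_multichoose]

theorem card_cores_mul {a b : ℕ} [NeZero a] (hab : a.Coprime b) :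
    Nat.card {μ : YoungDiagram | μ.IsCore a ∧ μ.IsCore b} * a = a.multichoose b := by
  rw [card_cores_eq_card_isSemimodule hab, card_isSemimodule_mul hab, card_sum_eq, ZMod.card]

end SimultaneousCores

/-- The number of nonnegative integer solutions of `x_0 + ⋯ + x_n = b` is
`(n+b).choose b`, and hence the number of `(n+1, b)`-cores for `gcd(n+1,b) = 1`
equals `(1/(n+1)) * (n+b).choose b`. -/
theorem card_solutions_and_cores (n b : ℕ) (hn : 0 < n) :
    Nat.card {x : Fin (n + 1) → ℕ // ∑ i, x i = b} = (n + b).choose b ∧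
    (Nat.Coprime (n + 1) b →
      Nat.card {μ : YoungDiagram | μ.IsCore (n + 1) ∧ μ.IsCore b}
        = (n + b).choose b / (n + 1)) := by
  have multichoose_eq : (n + 1).multichoose b = (n + b).choose b := by
    rw [Nat.multichoose_eq, Nat.add_right_comm, Nat.add_sub_cancel]
  refine ⟨?_, fun hab => ?_⟩
  · rw [SimultaneousCores.card_sum_eq, Fintype.card_fin, multichoose_eq]
  · exact Nat.eq_div_of_mul_eq_left n.succ_ne_zero
      ((SimultaneousCores.card_cores_mul hab).trans multichoose_eq)
end

section
/- For n >= 1 and coprime h = n+1 and b, let mu = n(b-1)(n+b+2)/24 be the mean size. Then the sum over all (n+1, b)-cores lambda of (size(lambda) - mu)^2 equals (1/(n+1)) * binomial(n+b, b) * (n+1)(n)b(b-1)(n+1+b)(n+b+2)/1440. -/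
/-!
A partition is recorded by its beta-set, the set of first-column hook lengths, and it is an `a`-core
if and only if its beta-set is closed under subtraction of `a`. An `(a, b)`-core is thus given by
the least gaps `t c` of its beta-set in the residue classes `c` modulo `a`, and being a `b`-core
means `t (c + b) ≤ t c + b`. For coprime `a` and `b`, the walk `r, r + b, r + 2 * b, …` visits
every class once, and the steps `t (c + b) = t c + b - a * z` form a composition `z` of `b` into
`a` nonnegative parts. Conversely, every composition closes up to a cyclic walk, unique up to
translation, so that pairs of an `(a, b)`-core and a starting class `r` correspond to compositions.

The size of an `a`-core is a quadratic polynomial in its least gaps. Because the weight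
`w i = i * (a - i)` inverts the second difference on `ZMod a` up to constants, the size becomes an
affine function of the quadratic form `∑ i, ∑ j, w (i - j) * (z i * z j)` of the composition `z`.
Its first two moments over all compositions follow from the fact that, for any exponents `κ`, the
products `∏ i, (z i).choose (κ i)` sum to a single binomial coefficient.
-/

namespace SimultaneousCores

open Finset

section BetaSet

variable {μ : YoungDiagram} {i j : ℕ}

/-- The beta-set of a partition: the set of hook lengths of its first column, i.e. the positions
of the beads on its abacus. -/
def betaSet (μ : YoungDiagram) : Finset ℕ :=
  (range (μ.colLen 0)).image fun i => μ.hookLength i 0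

lemma mem_betaSet {x : ℕ} : x ∈ betaSet μ ↔ ∃ i < μ.colLen 0, μ.hookLength i 0 = x := by
  simp [betaSet]

lemma lt_colLen_iff_lt_rowLen : i < μ.colLen j ↔ j < μ.rowLen i := by
  rw [← YoungDiagram.mem_iff_lt_colLen, YoungDiagram.mem_iff_lt_rowLen]

lemma strictAntiOn_hookLength_zero :
    StrictAntiOn (fun i => μ.hookLength i 0) (range (μ.colLen 0)) := by
  intro i _ k hk hik
  have hrow := μ.rowLen_anti i k hik.le
  have hk' : k < μ.colLen 0 := by simpa using hk
  simp only [YoungDiagram.hookLength]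
  omega

lemma card_betaSet (μ : YoungDiagram) : #(betaSet μ) = μ.colLen 0 := by
  rw [betaSet, card_image_of_injOn strictAntiOn_hookLength_zero.injOn, card_range]

lemma zero_notMem_betaSet (μ : YoungDiagram) : 0 ∉ betaSet μ := by
  rw [mem_betaSet]
  rintro ⟨i, hi, h⟩
  have := lt_colLen_iff_lt_rowLen.1 hi
  simp only [YoungDiagram.hookLength] at h
  omega

lemma card_eq_sum_rowLen (μ : YoungDiagram) :
    μ.card = ∑ i ∈ range (μ.colLen 0), μ.rowLen i := by
  have hfst : Set.MapsTo Prod.fst (μ.cells : Set (ℕ × ℕ)) (range (μ.colLen 0)) := by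
    rintro ⟨i, j⟩ hij
    have hij : i < μ.colLen j := YoungDiagram.mem_iff_lt_colLen.1 hij
    simpa using hij.trans_le (μ.colLen_anti 0 j j.zero_le)
  rw [YoungDiagram.card, card_eq_sum_card_fiberwise hfst]
  exact sum_congr rfl fun i _ => μ.rowLen_eq_card.symm

lemma card_add_sum_range (μ : YoungDiagram) :
    μ.card + ∑ i ∈ range (μ.colLen 0), i = ∑ x ∈ betaSet μ, x := by
  rw [betaSet, sum_image strictAntiOn_hookLength_zero.injOn, card_eq_sum_rowLen,
    ← sum_range_reflect (fun i => i), ← sum_add_distrib]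
  refine sum_congr rfl fun i hi => ?_
  have := mem_range.1 hi
  simp only [YoungDiagram.hookLength]
  omega

-- The gap `x` of column `j` is the label of the `j`-th horizontal step of the boundary path, which
-- is preceded by `j` horizontal and `μ.colLen 0 - μ.colLen j` vertical steps.
lemma notMem_betaSet_iff {x : ℕ} :
    x ∉ betaSet μ ↔ ∃ j, x + μ.colLen j = μ.colLen 0 + j := by
  constructor
  · intro hx
    have hend : μ.hookLength (μ.colLen 0) 0 ≤ x := by
      have : ¬ 0 < μ.rowLen (μ.colLen 0) := fun h => (lt_colLen_iff_lt_rowLen.2 h).false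
      simp only [YoungDiagram.hookLength]
      omega
    have hex : ∃ i, μ.hookLength i 0 ≤ x := ⟨_, hend⟩
    obtain ⟨i, hi, hmin⟩ : ∃ i, μ.hookLength i 0 ≤ x ∧ ∀ k < i, x < μ.hookLength k 0 :=
      ⟨Nat.find hex, Nat.find_spec hex, fun k hk => not_le.1 (Nat.find_min hex hk)⟩
    have hiN : i ≤ μ.colLen 0 := not_lt.1 fun h => hend.not_gt (hmin _ h)
    have hne : i < μ.colLen 0 → μ.hookLength i 0 ≠ x := fun h h' => hx (mem_betaSet.2 ⟨i, h, h'⟩)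
    have hpos := @lt_colLen_iff_lt_rowLen μ i 0
    have hupper := @lt_colLen_iff_lt_rowLen μ i (x + i - μ.colLen 0)
    have hlower := @lt_colLen_iff_lt_rowLen μ (i - 1) (x + i - μ.colLen 0)
    have hprev := hmin (i - 1)
    simp only [YoungDiagram.hookLength] at hi hne hprev
    exact ⟨x + i - μ.colLen 0, by omega⟩
  · rintro ⟨j, hj⟩ hx
    obtain ⟨k, hk, rfl⟩ := mem_betaSet.1 hx
    have := @lt_colLen_iff_lt_rowLen μ k j
    have := μ.colLen_anti 0 j j.zero_le
    simp only [YoungDiagram.hookLength] at hj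
    omega

lemma exists_hookLength_eq_iff (hi : i < μ.colLen 0) {d : ℕ} :
    (∃ j, (i, j) ∈ μ ∧ μ.hookLength i j = d) ↔
      d ≤ μ.hookLength i 0 ∧ μ.hookLength i 0 - d ∉ betaSet μ := by
  simp only [notMem_betaSet_iff, YoungDiagram.mem_iff_lt_colLen, YoungDiagram.hookLength]
  constructor
  · rintro ⟨j, hij, rfl⟩
    have := lt_colLen_iff_lt_rowLen.1 hij
    have := μ.colLen_anti 0 j j.zero_le
    exact ⟨by omega, j, by omega⟩
  · rintro ⟨hd, j, hj⟩
    have := @lt_colLen_iff_lt_rowLen μ i j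
    exact ⟨j, by omega⟩

/-- Closure of a set of natural numbers under subtraction of `a`, as long as the result stays
nonnegative: on the abacus with `a` runners, all beads are pushed down. -/
def IsSubClosed (a : ℕ) (X : Finset ℕ) : Prop :=
  ∀ x ∈ X, a ≤ x → x - a ∈ X

lemma IsSubClosed.sub_mul_mem {a : ℕ} {X : Finset ℕ} (h : IsSubClosed a X) {x : ℕ} (hx : x ∈ X)
    {m : ℕ} (hm : a * m ≤ x) : x - a * m ∈ X := by
  induction m with
  | zero => simpa using hx
  | succ m ih =>
    rw [Nat.mul_succ] at hm ⊢
    rw [← Nat.sub_sub]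
    exact h _ (ih (by omega)) (by omega)

lemma isCore_iff_isSubClosed_betaSet {a : ℕ} : μ.IsCore a ↔ IsSubClosed a (betaSet μ) := by
  constructor
  · intro h x hx hax
    obtain ⟨i, hi, rfl⟩ := mem_betaSet.1 hx
    by_contra hgap
    obtain ⟨j, hij, hhook⟩ := (exists_hookLength_eq_iff hi).2 ⟨hax, hgap⟩
    exact h i j hij hhook.symm.dvd
  · rintro h i j hij ⟨m, hm⟩
    have hi : i < μ.colLen 0 :=
      (YoungDiagram.mem_iff_lt_colLen.1 hij).trans_le (μ.colLen_anti 0 j j.zero_le)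
    obtain ⟨hle, hgap⟩ := (exists_hookLength_eq_iff hi).1 ⟨j, hij, hm⟩
    exact hgap (h.sub_mul_mem (mem_betaSet.2 ⟨i, hi, rfl⟩) hle)

lemma betaSet_injective : Function.Injective betaSet := by
  intro μ ν h
  have hcol : μ.colLen 0 = ν.colLen 0 := by rw [← card_betaSet, ← card_betaSet, h]
  have hanti (κ : YoungDiagram) (hκ : μ.colLen 0 = κ.colLen 0) :
      StrictAnti fun i : Fin (μ.colLen 0) => κ.hookLength i 0 := fun i k hik =>
    strictAntiOn_hookLength_zero (by simp [← hκ]) (by simp [← hκ]) hik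
  have hhook := ((hanti μ rfl).range_inj (hanti ν hcol)).1 <| by
    ext x
    have := congrArg (x ∈ ·) h
    simpa [mem_betaSet, ← hcol, Fin.exists_iff] using this
  ext ⟨i, j⟩
  simp only [YoungDiagram.mem_cells, YoungDiagram.mem_iff_lt_rowLen]
  have hμ := @lt_colLen_iff_lt_rowLen μ i 0
  have hν := @lt_colLen_iff_lt_rowLen ν i 0
  by_cases hi : i < μ.colLen 0
  · have := congrFun hhook ⟨i, hi⟩
    simp only [YoungDiagram.hookLength] at this
    omega
  · omega

lemma exists_forall_rowLen_eq {g : ℕ → ℕ} (hg : Antitone g) {N : ℕ} (hN : g N = 0) :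
    ∃ μ : YoungDiagram, ∀ i, μ.rowLen i = g i := by
  let cells : Finset (ℕ × ℕ) := {c ∈ range N ×ˢ range (g 0) | c.2 < g c.1}
  have hcells : IsLowerSet (cells : Set (ℕ × ℕ)) := by
    rintro ⟨i, j⟩ ⟨i', j'⟩ ⟨hi, hj⟩ h
    have hgi : g i ≤ g i' := hg hi
    simp only [cells, mem_coe, mem_filter, mem_product, mem_range] at h hi hj ⊢
    omega
  refine ⟨⟨cells, hcells⟩, fun i => eq_of_forall_lt_iff fun j => ?_⟩
  have hgi : g i ≤ g 0 := hg i.zero_le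
  have hgN : N ≤ i → g i ≤ g N := fun h => hg h
  rw [← YoungDiagram.mem_iff_lt_rowLen, YoungDiagram.mem_mk]
  simp only [cells, mem_filter, mem_product, mem_range]
  omega

lemma card_filter_lt_lt_card_filter_lt_iff {α : Type*} [LinearOrder α] {X : Finset α} {x : α}
    (hx : x ∈ X) (y : α) : #{z ∈ X | x < z} < #{z ∈ X | y < z} ↔ y < x := by
  refine ⟨fun h => not_le.1 fun hxy => h.not_ge ?_, fun h => ?_⟩
  · exact card_le_card <| monotone_filter_right _ fun z _ hz => hxy.trans_lt hz
  · exact card_lt_card <| (ssubset_iff_of_subset <|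
      monotone_filter_right _ fun z _ hz => h.trans hz).2 ⟨x, by simp [hx, h]⟩

lemma card_filter_lt_add_card_filter_gt {α : Type*} [LinearOrder α] {X : Finset α} {x : α}
    (hx : x ∈ X) : #{z ∈ X | z < x} + #{z ∈ X | x < z} + 1 = #X := by
  have hge : {z ∈ X | ¬ z < x} = insert x {z ∈ X | x < z} := by
    ext z
    simp only [mem_filter, mem_insert, not_lt, le_iff_eq_or_lt, eq_comm (a := x)]
    grind
  rw [← card_filter_add_card_filter_not (s := X) (· < x), hge, card_insert_of_notMem (by simp),
    add_assoc]

lemma card_filter_lt_add_card_gaps (X : Finset ℕ) (x : ℕ) :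
    #{y ∈ X | y < x} + #{y ∈ range x | y ∉ X} = x := by
  have hbeads : {y ∈ X | y < x} = {y ∈ range x | y ∈ X} := ext fun y => by simp [and_comm]
  rw [hbeads, card_filter_add_card_filter_not, card_range]

-- The row of the bead `x` is indexed by the number of beads above `x`, and its length is the number
-- of gaps below `x`.
lemma exists_betaSet_eq {X : Finset ℕ} (hX : 0 ∉ X) : ∃ μ, betaSet μ = X := by
  let above (y : ℕ) : ℕ := #{x ∈ X | y < x}
  let g (i : ℕ) : ℕ := #{y ∈ range (X.sup id) | y ∉ X ∧ i < above y}
  have hg : Antitone g := fun i i' h => card_le_card <|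
    monotone_filter_right _ fun y _ hy => ⟨hy.1, h.trans_lt hy.2⟩
  have hg_card : g #X = 0 := card_eq_zero.2 <| filter_eq_empty_iff.2 fun y _ hy =>
    hy.2.not_ge (card_filter_le _ _)
  have hX_pos (x : ℕ) (hx : x ∈ X) : 0 < x := Nat.pos_of_ne_zero fun h => hX (h ▸ hx)
  have hg_pos (i : ℕ) (hi : i < #X) : 0 < g i := by
    have hzero : above 0 = #X := congrArg card <| filter_true_of_mem hX_pos
    obtain ⟨x, hx⟩ := card_pos.1 (i.zero_le.trans_lt hi)
    have hsup : 0 < X.sup id := (hX_pos x hx).trans_le (le_sup (f := id) hx)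
    exact card_pos.2 ⟨0, by simpa [hX, hzero, hi] using hsup⟩
  have hg_above (x : ℕ) (hx : x ∈ X) : g (above x) = #{y ∈ range x | y ∉ X} := by
    refine congrArg card <| ext fun y => ?_
    have hxsup : x ≤ X.sup id := le_sup (f := id) hx
    simp only [above, card_filter_lt_lt_card_filter_lt_iff hx, mem_filter, mem_range]
    exact ⟨fun h => ⟨h.2.2, h.2.1⟩, fun h => ⟨h.1.trans_le hxsup, h.2, h.1⟩⟩
  obtain ⟨μ, hμ⟩ := exists_forall_rowLen_eq hg hg_card
  have hcol : μ.colLen 0 = #X := eq_of_forall_lt_iff fun i => by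
    rw [lt_colLen_iff_lt_rowLen, hμ]
    exact ⟨fun h => not_le.1 fun hi => h.ne' (Nat.le_zero.1 (hg_card ▸ hg hi)), hg_pos i⟩
  refine ⟨μ, (eq_of_subset_of_card_le (fun x hx => ?_) (by rw [card_betaSet, hcol])).symm⟩
  have hpartition : #{y ∈ X | y < x} + above x + 1 = #X := card_filter_lt_add_card_filter_gt hx
  have hgaps := card_filter_lt_add_card_gaps X x
  rw [← hg_above x hx, ← hμ] at hgaps
  refine mem_betaSet.2 ⟨above x, by omega, ?_⟩
  simp only [YoungDiagram.hookLength]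
  omega

end BetaSet

section PowerSums

variable {K : Type*} [Field K] [CharZero K] (a : ℕ)

lemma sum_range_cast : ∑ i ∈ range a, (i : K) = a * (a - 1) / 2 := by
  induction a with
  | zero => simp
  | succ a ih => rw [sum_range_succ, ih]; push_cast; ring

lemma sum_range_cast_sq : ∑ i ∈ range a, (i : K) ^ 2 = a * (a - 1) * (2 * a - 1) / 6 := by
  induction a with
  | zero => simp
  | succ a ih => rw [sum_range_succ, ih]; push_cast; ring

lemma sum_range_cast_cube : ∑ i ∈ range a, (i : K) ^ 3 = (a * (a - 1) / 2) ^ 2 := by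
  induction a with
  | zero => simp
  | succ a ih => rw [sum_range_succ, ih]; push_cast; ring

lemma sum_range_cast_pow_four :
    ∑ i ∈ range a, (i : K) ^ 4 = a * (a - 1) * (2 * a - 1) * (3 * a ^ 2 - 3 * a - 1) / 30 := by
  induction a with
  | zero => simp
  | succ a ih => rw [sum_range_succ, ih]; push_cast; ring

end PowerSums

section LeastGap

variable {a b : ℕ} [NeZero a] {X : Finset ℕ}

/-- The least natural number of the residue class `c` modulo `a` which is not in `X`: the first
free position on the runner `c` of the abacus with `a` runners. -/
noncomputable def leastGap (a : ℕ) (X : Finset ℕ) (c : ZMod a) : ℕ :=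
  sInf {m : ℕ | (m : ZMod a) = c ∧ m ∉ X}

lemma isLeast_leastGap (X : Finset ℕ) (c : ZMod a) :
    IsLeast {m : ℕ | (m : ZMod a) = c ∧ m ∉ X} (leastGap a X c) := by
  refine ⟨Nat.sInf_mem ⟨c.val + a * (X.sup id + 1), by simp, fun h => ?_⟩,
    fun m hm => Nat.sInf_le hm⟩
  have hle : c.val + a * (X.sup id + 1) ≤ X.sup id := le_sup (f := id) h
  have := Nat.le_mul_of_pos_left (X.sup id + 1) (NeZero.pos a)
  omega

lemma natCast_leastGap (X : Finset ℕ) (c : ZMod a) : (leastGap a X c : ZMod a) = c :=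
  (isLeast_leastGap X c).1.1

lemma leastGap_notMem (X : Finset ℕ) (c : ZMod a) : leastGap a X c ∉ X :=
  (isLeast_leastGap X c).1.2

lemma leastGap_injective (X : Finset ℕ) : Function.Injective (leastGap a X) :=
  Function.LeftInverse.injective (natCast_leastGap X)

lemma leastGap_eq {t : ZMod a → ℕ} (ht : ∀ c, (t c : ZMod a) = c)
    (hX : ∀ m : ℕ, m ∈ X ↔ m < t m) : leastGap a X = t := by
  funext c
  refine le_antisymm ((isLeast_leastGap X c).2 ⟨ht c, by simp [hX, ht]⟩) (not_lt.1 fun h => ?_)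
  exact leastGap_notMem X c ((hX _).2 (by rwa [natCast_leastGap]))

lemma IsSubClosed.mem_iff_lt_leastGap (h : IsSubClosed a X) {m : ℕ} :
    m ∈ X ↔ m < leastGap a X m := by
  refine ⟨fun hm => not_le.1 fun hle => leastGap_notMem X (m : ZMod a) ?_,
    fun hlt => by_contra fun hm => hlt.not_ge ((isLeast_leastGap X _).2 ⟨rfl, hm⟩)⟩
  obtain ⟨k, hk⟩ : a ∣ m - leastGap a X m :=
    (Nat.modEq_iff_dvd' hle).1 ((ZMod.natCast_eq_natCast_iff _ _ _).1 (natCast_leastGap X _))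
  have := h.sub_mul_mem hm (m := k) (by omega)
  rwa [← hk, Nat.sub_sub_self hle] at this

lemma IsSubClosed.leastGap_natCast_eq_self_iff (h : IsSubClosed a X) {y : ℕ} :
    leastGap a X y = y ↔ y ∉ X ∧ (a ≤ y → y - a ∈ X) := by
  have hcast (hay : a ≤ y) : ((y - a : ℕ) : ZMod a) = y := by simp [Nat.cast_sub hay]
  rw [h.mem_iff_lt_leastGap]
  constructor
  · intro hy
    refine ⟨by omega, fun hay => ?_⟩
    rw [h.mem_iff_lt_leastGap, hcast hay, hy]
    have := NeZero.pos a
    omega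
  · rintro ⟨hle, hsub⟩
    refine (not_lt.1 hle).eq_of_not_lt fun hlt => ?_
    have hay : leastGap a X y + a ≤ y :=
      ((ZMod.natCast_eq_natCast_iff _ _ _).1 (natCast_leastGap X _)).add_le_of_lt hlt
    have := h.mem_iff_lt_leastGap.1 (hsub (by omega))
    rw [hcast (by omega)] at this
    omega

-- Pushing every bead up by one row frees the positions below `a` and fills the least gaps.
lemma IsSubClosed.sum_add_sum_range {M : Type*} [AddCommMonoid M] (h : IsSubClosed a X)
    (f : ℕ → M) :
    ∑ x ∈ X, f (x + a) + ∑ i ∈ range a, f i = ∑ x ∈ X, f x + ∑ c, f (leastGap a X c) := by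
  have hunion : X.map (addRightEmbedding a) ∪ range a = X ∪ univ.image (leastGap a X) := by
    ext y
    have hgap : (∃ c, leastGap a X c = y) ↔ leastGap a X y = y :=
      ⟨fun ⟨c, hc⟩ => by rw [← hc, natCast_leastGap], fun hy => ⟨_, hy⟩⟩
    have hshift : (∃ x ∈ X, x + a = y) ↔ a ≤ y ∧ y - a ∈ X :=
      ⟨fun ⟨x, hx, hxy⟩ => ⟨by omega, by rwa [← hxy, Nat.add_sub_cancel]⟩,
        fun ⟨hay, hy⟩ => ⟨y - a, hy, Nat.sub_add_cancel hay⟩⟩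
    simp only [mem_union, mem_map, mem_image, mem_univ, true_and, mem_range,
      addRightEmbedding_apply, hgap, hshift, h.leastGap_natCast_eq_self_iff]
    have := h y
    by_cases a ≤ y <;> by_cases y ∈ X <;> simp_all
  have hdisj : Disjoint (X.map (addRightEmbedding a)) (range a) :=
    disjoint_left.2 fun y hy hya => by
      obtain ⟨x, -, rfl⟩ := mem_map.1 hy
      simp at hya
  have hdisj' : Disjoint X (univ.image (leastGap a X)) :=
    disjoint_left.2 fun y hyX hy => by
      obtain ⟨c, -, rfl⟩ := mem_image.1 hy
      exact leastGap_notMem X c hyX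
  rw [← sum_image fun c _ d _ hcd => leastGap_injective X hcd, ← sum_union hdisj', ← hunion,
    sum_union hdisj, sum_map]
  rfl

lemma card_eq_sum_leastGap {μ : YoungDiagram} (hμ : μ.IsCore a) :
    (μ.card : ℚ) = (a * ∑ c, (leastGap a (betaSet μ) c : ℚ) ^ 2
      - (∑ c, (leastGap a (betaSet μ) c : ℚ)) ^ 2) / (2 * a ^ 2) - ((a : ℚ) ^ 2 - 1) / 24 := by
  have hclosed := isCore_iff_isSubClosed_betaSet.1 hμ
  have hcard : (μ.card : ℚ) + ∑ i ∈ range (μ.colLen 0), (i : ℚ) = ∑ x ∈ betaSet μ, (x : ℚ) := by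
    rw [← Nat.cast_sum, ← Nat.cast_sum, ← Nat.cast_add, card_add_sum_range]
  have hlin := hclosed.sum_add_sum_range fun x => (x : ℚ)
  have hsq := hclosed.sum_add_sum_range fun x => (x : ℚ) ^ 2
  simp only [Nat.cast_add, add_sq, sum_add_distrib, sum_const, card_betaSet, nsmul_eq_mul,
    ← sum_mul, ← mul_sum, sum_range_cast, sum_range_cast_sq] at hcard hlin hsq
  have ha : (a : ℚ) ≠ 0 := NeZero.ne _
  have hsum : ∑ c, (leastGap a (betaSet μ) c : ℚ) = μ.colLen 0 * a + a * (a - 1) / 2 := by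
    linarith
  have hsum_sq : ∑ c, (leastGap a (betaSet μ) c : ℚ) ^ 2 = 2 * a * ∑ x ∈ betaSet μ, (x : ℚ)
      + μ.colLen 0 * a ^ 2 + a * (a - 1) * (2 * a - 1) / 6 := by linarith
  rw [hsum, hsum_sq, ← hcard]
  field_simp
  ring

/-- `t c` is the least element of the residue class `c` modulo `a` in a set of natural numbers
which contains `0` and is closed under addition of `a` and `b`. The complements of the beta-sets of
`(a, b)`-cores are the sets of this kind. -/
structure IsApery (b : ℕ) (t : ZMod a → ℕ) : Prop where
  zero : t 0 = 0
  natCast (c : ZMod a) : (t c : ZMod a) = c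
  add_le (c : ZMod a) : t (c + b) ≤ t c + b

lemma isApery_leastGap_betaSet {μ : YoungDiagram} (hb : μ.IsCore b) :
    IsApery b (leastGap a (betaSet μ)) where
  zero := Nat.le_zero.1 <| (isLeast_leastGap _ 0).2 ⟨Nat.cast_zero, zero_notMem_betaSet μ⟩
  natCast := natCast_leastGap _
  add_le c := (isLeast_leastGap _ _).2 ⟨by simp [natCast_leastGap], fun h => leastGap_notMem _ c <|
    by simpa using isCore_iff_isSubClosed_betaSet.1 hb _ h (Nat.le_add_left b _)⟩

lemma IsApery.exists_leastGap_eq {t : ZMod a → ℕ} (ht : IsApery b t) :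
    ∃ μ : YoungDiagram, (μ.IsCore a ∧ μ.IsCore b) ∧ leastGap a (betaSet μ) = t := by
  let X : Finset ℕ := {m ∈ range (∑ c, t c) | m < t m}
  have hX (m : ℕ) : m ∈ X ↔ m < t m := by
    simp only [X, mem_filter, mem_range, and_iff_right_iff_imp]
    exact fun hm => hm.trans_le (single_le_sum_of_canonicallyOrdered (f := t) (mem_univ _))
  obtain ⟨μ, hμ⟩ := exists_betaSet_eq (X := X) (by simp [hX, ht.zero])
  refine ⟨μ, ⟨?_, ?_⟩, leastGap_eq ht.natCast (hμ ▸ hX)⟩ <;>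
    rw [isCore_iff_isSubClosed_betaSet, hμ] <;> intro m hm hle <;> rw [hX] at hm ⊢
  · rw [Nat.cast_sub hle, ZMod.natCast_self, sub_zero]
    exact (Nat.sub_le m a).trans_lt hm
  · have := ht.add_le (m - b : ℕ)
    rw [← Nat.cast_add, Nat.sub_add_cancel hle] at this
    omega

lemma bijOn_leastGap_betaSet :
    Set.BijOn (fun μ => leastGap a (betaSet μ)) {μ : YoungDiagram | μ.IsCore a ∧ μ.IsCore b}
      {t | IsApery b t} := by
  refine ⟨fun μ hμ => isApery_leastGap_betaSet hμ.2, fun μ hμ ν hν h => ?_,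
    fun t ht => ht.exists_leastGap_eq⟩
  refine betaSet_injective <| ext fun m => ?_
  rw [(isCore_iff_isSubClosed_betaSet.1 hμ.1).mem_iff_lt_leastGap,
    (isCore_iff_isSubClosed_betaSet.1 hν.1).mem_iff_lt_leastGap]
  exact Iff.of_eq (congrArg (m < · m) h)

end LeastGap

section CyclicPaths

variable {a b : ℕ}

/-- A closed sequence of natural numbers with minimum `0`, each of whose steps is at most `b` and
congruent to `b` modulo `a`. Reading an Apéry family along `r, r + b, r + 2 * b, …` gives such a
sequence. -/
structure IsCyclicPath (b : ℕ) (u : ZMod a → ℕ) : Prop where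
  exists_eq_zero : ∃ k, u k = 0
  natCast_add_one (k : ZMod a) : (u (k + 1) : ZMod a) = u k + b
  add_one_le (k : ZMod a) : u (k + 1) ≤ u k + b

/-- The numbers `z k` with `u (k + 1) = u k + b - a * z k`; for a cyclic path `u` they form a
composition of `b` into `a` nonnegative parts. -/
def cyclicSteps (b : ℕ) (u : ZMod a → ℕ) (k : ZMod a) : ℕ :=
  (u k + b - u (k + 1)) / a

lemma IsCyclicPath.add_eq_add_mul_cyclicSteps {u : ZMod a → ℕ} (hu : IsCyclicPath b u)
    (k : ZMod a) : u k + b = u (k + 1) + a * cyclicSteps b u k := by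
  have hdvd : a ∣ u k + b - u (k + 1) := by
    rw [← ZMod.natCast_eq_zero_iff, Nat.cast_sub (hu.add_one_le k), hu.natCast_add_one]
    simp
  rw [cyclicSteps, Nat.mul_div_cancel' hdvd, Nat.add_sub_cancel' (hu.add_one_le k)]

lemma IsApery.isCyclicPath (hab : a.Coprime b) {t : ZMod a → ℕ} (ht : IsApery b t) (r : ZMod a) :
    IsCyclicPath b fun k : ZMod a => t (r + k * b) where
  exists_eq_zero := ⟨-r * (b : ZMod a)⁻¹, by
    rw [mul_assoc, mul_comm _ (b : ZMod a), ZMod.coe_mul_inv_eq_one b hab.symm]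
    simpa using ht.zero⟩
  natCast_add_one k := by simp only [ht.natCast]; ring
  add_one_le k := by
    have := ht.add_le (r + k * b)
    rwa [show r + k * b + b = r + (k + 1) * b by ring] at this

variable [NeZero a]

lemma zmod_induction {P : ZMod a → Prop} (zero : P 0) (add_one : ∀ k, P k → P (k + 1))
    (k : ZMod a) : P k := by
  obtain ⟨i, rfl⟩ := ZMod.natCast_zmod_surjective k
  induction i with
  | zero => simpa using zero
  | succ i ih => simpa using add_one _ ih

lemma sum_zmod_eq_sum_range {M : Type*} [AddCommMonoid M] (f : ZMod a → M) :
    ∑ c, f c = ∑ i ∈ range a, f i :=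
  sum_nbij' ZMod.val (fun i => (i : ZMod a)) (fun c _ => mem_range.2 c.val_lt)
    (fun _ _ => mem_univ _) (fun c _ => c.natCast_zmod_val)
    (fun _ hi => ZMod.val_cast_of_lt (mem_range.1 hi)) (fun c _ => by rw [c.natCast_zmod_val])

lemma exists_forall_add_one_eq_add {A : Type*} [AddCommGroup A] {v : ZMod a → A}
    (hv : ∑ c, v c = 0) : ∃ u : ZMod a → A, ∀ k, u (k + 1) = u k + v k := by
  refine ⟨fun c => ∑ i ∈ range c.val, v i, fun k => ?_⟩
  have hsucc : ∑ i ∈ range k.val, v i + v k = ∑ i ∈ range (k.val + 1), v i := by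
    rw [sum_range_succ, k.natCast_zmod_val]
  rw [hsucc]
  rcases (Nat.succ_le_of_lt k.val_lt).lt_or_eq with hlt | heq
  · have hval : (k + 1).val = k.val + 1 := by
      simpa using ZMod.val_cast_of_lt hlt
    simp only [hval]
  · have hk : k + 1 = 0 := by
      rw [← k.natCast_zmod_val, ← Nat.cast_succ, heq, ZMod.natCast_self]
    simp only [hk, ZMod.val_zero, range_zero, sum_empty]
    rw [← Nat.succ_eq_add_one, heq, ← sum_zmod_eq_sum_range, hv]

lemma IsCyclicPath.natCast {u : ZMod a → ℕ} (hu : IsCyclicPath b u) (k : ZMod a) :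
    (u k : ZMod a) = u 0 + k * b := by
  induction k using zmod_induction with
  | zero => simp
  | add_one k ih => rw [hu.natCast_add_one, ih]; ring

lemma IsCyclicPath.exists_isApery (hab : a.Coprime b) {u : ZMod a → ℕ} (hu : IsCyclicPath b u) :
    ∃ t : ZMod a → ℕ, IsApery b t ∧ ∃ r, (fun k : ZMod a => t (r + k * b)) = u := by
  have hunit : (b : ZMod a) * (b : ZMod a)⁻¹ = 1 := ZMod.coe_mul_inv_eq_one b hab.symm
  have hcancel (k : ZMod a) : (u 0 + k * (b : ZMod a) - u 0) * (b : ZMod a)⁻¹ = k := by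
    linear_combination k * hunit
  refine ⟨fun c => u ((c - (u 0 : ZMod a)) * (b : ZMod a)⁻¹), ⟨?_, fun c => ?_, fun c => ?_⟩, u 0,
    funext fun k => congrArg u (hcancel k)⟩
  · obtain ⟨k, hk⟩ := hu.exists_eq_zero
    have hzero : (0 : ZMod a) = u 0 + k * b := by rw [← hu.natCast, hk, Nat.cast_zero]
    have hindex : (0 - u 0) * (b : ZMod a)⁻¹ = k := by
      linear_combination k * hunit + (b : ZMod a)⁻¹ * hzero
    exact (congrArg u hindex).trans hk
  · rw [hu.natCast]
    linear_combination (c - u 0) * hunit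
  · have hshift : (c + b - u 0) * (b : ZMod a)⁻¹ = (c - u 0) * (b : ZMod a)⁻¹ + 1 := by
      linear_combination hunit
    simpa only [hshift] using hu.add_one_le _

lemma bijOn_isApery_isCyclicPath (hab : a.Coprime b) :
    Set.BijOn (fun p : (ZMod a → ℕ) × ZMod a => fun k : ZMod a => p.1 (p.2 + k * b))
      ({t | IsApery b t} ×ˢ Set.univ) {u | IsCyclicPath b u} := by
  refine ⟨fun p hp => hp.1.isCyclicPath hab p.2, ?_, fun u hu => ?_⟩
  · rintro ⟨t, r⟩ ⟨ht, -⟩ ⟨t', r'⟩ ⟨ht', -⟩ h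
    obtain rfl : r = r' := by
      have := congrArg (Nat.cast (R := ZMod a)) (congrFun h 0)
      simpa [ht.natCast, ht'.natCast] using this
    refine Prod.ext (funext fun c => ?_) rfl
    have hc : r + (c - r) * (b : ZMod a)⁻¹ * b = c := by
      linear_combination (c - r) * ZMod.coe_mul_inv_eq_one b hab.symm
    simpa only [hc] using congrFun h ((c - r) * (b : ZMod a)⁻¹)
  · obtain ⟨t, ht, r, htr⟩ := hu.exists_isApery hab
    exact ⟨(t, r), ⟨ht, trivial⟩, htr⟩

lemma cyclicSteps_eq {u z : ZMod a → ℕ} (h : ∀ k, u k + b = u (k + 1) + a * z k) :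
    cyclicSteps b u = z :=
  funext fun k => by
    rw [cyclicSteps, h, Nat.add_sub_cancel_left, Nat.mul_div_cancel_left _ (NeZero.pos a)]

lemma IsCyclicPath.sum_cyclicSteps {u : ZMod a → ℕ} (hu : IsCyclicPath b u) :
    ∑ k, cyclicSteps b u k = b := by
  have hsum := sum_congr rfl fun k (_ : k ∈ univ) => hu.add_eq_add_mul_cyclicSteps k
  have hshift : ∑ k, u (k + 1) = ∑ k, u k := Equiv.sum_comp (Equiv.addRight (1 : ZMod a)) u
  rw [sum_add_distrib, sum_add_distrib, hshift, ← mul_sum] at hsum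
  simpa [ZMod.card, NeZero.ne a] using (add_left_cancel hsum).symm

lemma IsCyclicPath.eq_of_cyclicSteps_eq {u u' : ZMod a → ℕ} (hu : IsCyclicPath b u)
    (hu' : IsCyclicPath b u') (h : cyclicSteps b u = cyclicSteps b u') : u = u' := by
  have hdiff (k : ZMod a) : u k + u' 0 = u' k + u 0 := by
    induction k using zmod_induction with
    | zero => exact add_comm _ _
    | add_one k ih =>
      have := hu.add_eq_add_mul_cyclicSteps k
      have := hu'.add_eq_add_mul_cyclicSteps k
      rw [← h] at this
      omega
  obtain ⟨k, hk⟩ := hu.exists_eq_zero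
  obtain ⟨k', hk'⟩ := hu'.exists_eq_zero
  have := hdiff k
  have := hdiff k'
  exact funext fun i => by have := hdiff i; omega

lemma exists_isCyclicPath_cyclicSteps_eq {z : ZMod a → ℕ} (hz : ∑ k, z k = b) :
    ∃ u, IsCyclicPath b u ∧ cyclicSteps b u = z := by
  have hzero : ∑ k : ZMod a, ((b : ℤ) - a * z k) = 0 := by
    simp [sum_sub_distrib, ← mul_sum, ← Nat.cast_sum, hz, ZMod.card]
  obtain ⟨w, hw⟩ := exists_forall_add_one_eq_add hzero
  obtain ⟨k₀, hk₀⟩ := Finite.exists_min w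
  have hstep (k : ZMod a) :
      (w k - w k₀).toNat + b = (w (k + 1) - w k₀).toNat + a * z k := by
    have := hw k
    have := hk₀ k
    have := hk₀ (k + 1)
    zify
    rw [Int.toNat_of_nonneg (by omega), Int.toNat_of_nonneg (by omega)]
    omega
  refine ⟨fun k => (w k - w k₀).toNat, ⟨⟨k₀, by simp⟩, fun k => ?_, fun k => ?_⟩,
    cyclicSteps_eq hstep⟩
  · have := congrArg (Nat.cast (R := ZMod a)) (hstep k)
    simpa using this.symm
  · exact Nat.le.intro (hstep k).symm

lemma bijOn_cyclicSteps :
    Set.BijOn (cyclicSteps b) {u : ZMod a → ℕ | IsCyclicPath b u}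
      (↑(piAntidiag univ b : Finset (ZMod a → ℕ))) := by
  refine ⟨fun u hu => ?_, fun u hu u' hu' => hu.eq_of_cyclicSteps_eq hu', fun z hz => ?_⟩
  · simpa using hu.sum_cyclicSteps
  · exact exists_isCyclicPath_cyclicSteps_eq (by simpa using hz)

/-- The composition of `b` into `a` parts which encodes an `(a, b)`-core together with a starting
residue `r`, read off the abacus along the runners `r, r + b, r + 2 * b, …`. -/
noncomputable def coreSteps (b : ℕ) (μ : YoungDiagram) (r : ZMod a) : ZMod a → ℕ :=
  cyclicSteps b fun k => leastGap a (betaSet μ) (r + k * b)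

lemma bijOn_coreSteps (hab : a.Coprime b) :
    Set.BijOn (fun p : YoungDiagram × ZMod a => coreSteps b p.1 p.2)
      ({μ | μ.IsCore a ∧ μ.IsCore b} ×ˢ Set.univ) (↑(piAntidiag univ b : Finset (ZMod a → ℕ))) :=
  bijOn_cyclicSteps.comp <| (bijOn_isApery_isCyclicPath hab).comp <|
    bijOn_leastGap_betaSet.prodMap (Set.bijOn_id _)

lemma card_nsmul_finsum_mem_eq_sum {α β ι M : Type*} [Fintype ι] [Nonempty ι] [AddCommMonoid M]
    {φ : α × ι → β} {s : Set α} {T : Finset β} (hφ : Set.BijOn φ (s ×ˢ Set.univ) T)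
    {F : α → M} {G : β → M} (hFG : ∀ x ∈ s, ∀ i, F x = G (φ (x, i))) :
    Fintype.card ι • ∑ᶠ x ∈ s, F x = ∑ z ∈ T, G z := by
  have hs : s.Finite := by
    have := (hφ.finite_iff_finite.2 T.finite_toSet).image Prod.fst
    rwa [Set.fst_image_prod _ Set.univ_nonempty] at this
  have hcoe : (↑(hs.toFinset ×ˢ (univ : Finset ι)) : Set (α × ι)) = s ×ˢ Set.univ := by simp
  have hmem {p : α × ι} (hp : p ∈ hs.toFinset ×ˢ (univ : Finset ι)) : p.1 ∈ s := by
    simpa using hp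
  rw [← hcoe] at hφ
  rw [← sum_nbij φ (fun p hp => hφ.mapsTo hp) hφ.injOn hφ.surjOn
      fun p hp => hFG p.1 (hmem hp) p.2, sum_product, finsum_mem_eq_finite_toFinset_sum _ hs,
    smul_sum]
  simp

end CyclicPaths

section Moments

variable {ι R : Type*} [Fintype ι] [CommSemiring R]

/-- The value at `x` of the quadratic form with coefficient matrix `W`. -/
def quadForm (W : ι → ι → R) (x : ι → R) : R :=
  ∑ i, ∑ j, W i j * (x i * x j)

lemma sum_quadForm_mul {α : Type*} (s : Finset α) (W : ι → ι → R) (x : α → ι → R) (f : α → R) :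
    ∑ z ∈ s, quadForm W (x z) * f z =
      ∑ k, ∑ l, W k l * ∑ z ∈ s, x z k * x z l * f z := by
  simp only [quadForm, sum_mul, mul_sum]
  rw [sum_comm]
  refine sum_congr rfl fun k _ => ?_
  rw [sum_comm]
  simp only [mul_assoc]

/-- The multi-index binomial coefficient `∏ i, z i choose κ i`. Its sums over the compositions of
`b` into nonnegative parts are binomial coefficients, so moments of compositions are computed by
expanding monomials in this basis. -/
def piChoose (z κ : ι → ℕ) : ℕ :=
  ∏ i, (z i).choose (κ i)

lemma piChoose_zero (z : ι → ℕ) : piChoose z 0 = 1 := by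
  simp [piChoose]

lemma coeff_X_pow_mul_mk_one_pow {R : Type*} [CommRing R] (n k m : ℕ) :
    PowerSeries.coeff m
        ((PowerSeries.X : PowerSeries R) ^ k * (PowerSeries.mk (1 : ℕ → R)) ^ (n + k + 1)) =
      (n + m).choose (n + k) := by
  rw [PowerSeries.coeff_X_pow_mul', PowerSeries.mk_one_pow_eq_mk_choose_add, PowerSeries.coeff_mk]
  split_ifs with hkm
  · rw [add_assoc, Nat.add_sub_cancel' hkm]
  · rw [Nat.choose_eq_zero_of_lt (by omega), Nat.cast_zero]

variable [DecidableEq ι]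

lemma sum_piAntidiag_eq_sum_finsuppAntidiag {M : Type*} [AddCommMonoid M] (b : ℕ)
    (f : (ι → ℕ) → M) :
    ∑ z ∈ piAntidiag univ b, f z = ∑ z ∈ finsuppAntidiag univ b, f z := by
  refine sum_equiv Finsupp.equivFunOnFinite.symm (fun z => ?_) fun z _ => rfl
  simp

lemma mul_choose_eq (m k : ℕ) :
    m * m.choose k = (k + 1) * m.choose (k + 1) + k * m.choose k := by
  rw [mul_comm (k + 1), Nat.choose_succ_right_eq]
  rcases le_or_gt k m with hk | hk
  · obtain ⟨d, rfl⟩ := Nat.exists_eq_add_of_le hk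
    rw [Nat.add_sub_cancel_left]
    ring
  · simp [Nat.choose_eq_zero_of_lt hk]

lemma mul_piChoose (z κ : ι → ℕ) (l : ι) :
    z l * piChoose z κ =
      (κ l + 1) * piChoose z (κ + Pi.single l 1) + κ l * piChoose z κ := by
  have hrest : ∏ i ∈ {l}ᶜ, (z i).choose ((κ + Pi.single l 1 : ι → ℕ) i) =
      ∏ i ∈ {l}ᶜ, (z i).choose (κ i) :=
    prod_congr rfl fun i hi => by simp_all
  simp only [piChoose, Fintype.prod_eq_mul_prod_compl l, hrest]
  rw [Pi.add_apply, Pi.single_eq_same, ← mul_assoc, mul_choose_eq]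
  ring

lemma mul_mul_piChoose (z κ : ι → ℕ) {k l : ι} (hkl : k ≠ l) :
    z k * z l * piChoose z κ =
      (κ k + 1) * (κ l + 1) * piChoose z (κ + Pi.single l 1 + Pi.single k 1)
        + (κ l + 1) * κ k * piChoose z (κ + Pi.single l 1)
        + (κ k + 1) * κ l * piChoose z (κ + Pi.single k 1)
        + κ k * κ l * piChoose z κ := by
  have hk : (κ + Pi.single l 1 : ι → ℕ) k = κ k := by simp [hkl]
  rw [mul_assoc, mul_piChoose, mul_add, mul_left_comm, mul_piChoose, hk, mul_left_comm,
    mul_piChoose]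
  ring

lemma mul_eq_piChoose (z : ι → ℕ) {k l : ι} (hkl : k ≠ l) :
    z k * z l = piChoose z (Pi.single l 1 + Pi.single k 1) := by
  simpa [piChoose_zero] using mul_mul_piChoose z 0 hkl

variable {n : ℕ}

-- The generating function of `m ↦ m.choose k` is `X ^ k / (1 - X) ^ (k + 1)`.
lemma sum_piAntidiag_piChoose (hn : Fintype.card ι = n + 1) (b : ℕ) (κ : ι → ℕ) :
    ∑ z ∈ piAntidiag univ b, piChoose z κ = (n + b).choose (n + ∑ i, κ i) := by
  have hfactor (k m : ℕ) :
      PowerSeries.coeff m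
        ((PowerSeries.X : PowerSeries ℤ) ^ k * (PowerSeries.mk (1 : ℕ → ℤ)) ^ (k + 1)) =
          m.choose k := by
    simpa using coeff_X_pow_mul_mk_one_pow (R := ℤ) 0 k m
  have hprod := PowerSeries.coeff_prod
    (fun i => (PowerSeries.X : PowerSeries ℤ) ^ κ i * (PowerSeries.mk (1 : ℕ → ℤ)) ^ (κ i + 1))
    b univ
  have hexponent : ∑ i, (κ i + 1) = n + ∑ i, κ i + 1 := by
    simp only [sum_add_distrib, sum_const, card_univ, hn, smul_eq_mul, mul_one]
    ring
  simp only [hfactor, prod_mul_distrib, prod_pow_eq_pow_sum, hexponent,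
    coeff_X_pow_mul_mk_one_pow] at hprod
  rw [sum_piAntidiag_eq_sum_finsuppAntidiag]
  zify
  simp only [piChoose, Nat.cast_prod, hprod]

lemma sum_piAntidiag_mul_mul_piChoose (hn : Fintype.card ι = n + 1) (b : ℕ) (κ : ι → ℕ)
    {k l : ι} (hkl : k ≠ l) :
    ∑ z ∈ piAntidiag univ b, z k * z l * piChoose z κ =
      (κ k + 1) * (κ l + 1) * (n + b).choose (n + ∑ i, κ i + 2)
        + (2 * (κ k * κ l) + κ k + κ l) * (n + b).choose (n + ∑ i, κ i + 1)
        + κ k * κ l * (n + b).choose (n + ∑ i, κ i) := by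
  simp only [mul_mul_piChoose _ κ hkl, sum_add_distrib, ← mul_sum, sum_piAntidiag_piChoose hn,
    Pi.add_apply, sum_pi_single', mem_univ, if_true, add_assoc, one_add_one_eq_two]
  ring

variable {W : ι → ι → R} {ρ σ : R}

lemma sum_piAntidiag_quadForm_mul_piChoose (hn : Fintype.card ι = n + 1) (b : ℕ)
    (hdiag : ∀ i, W i i = 0) (hsymm : ∀ i j, W i j = W j i) (hρ : ∀ i, ∑ j, W i j = ρ)
    (κ : ι → ℕ) :
    ∑ z ∈ piAntidiag univ b, quadForm W (fun i => (z i : R)) * piChoose z κ =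
      (n + 1) * ρ * (n + b).choose (n + ∑ i, κ i + 2)
        + 2 * ρ * (∑ i, κ i : ℕ) *
          ((n + b).choose (n + ∑ i, κ i + 2) + (n + b).choose (n + ∑ i, κ i + 1))
        + quadForm W (fun i => (κ i : R)) *
          ((n + b).choose (n + ∑ i, κ i + 2) + 2 * (n + b).choose (n + ∑ i, κ i + 1)
            + (n + b).choose (n + ∑ i, κ i)) := by
  have hmoment (k l : ι) :
      W k l * ∑ z ∈ piAntidiag univ b, (z k : R) * z l * piChoose z κ =
        W k l * (n + b).choose (n + ∑ i, κ i + 2)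
          + (W k l * κ k + W k l * κ l) *
            ((n + b).choose (n + ∑ i, κ i + 2) + (n + b).choose (n + ∑ i, κ i + 1))
          + W k l * (κ k * κ l) *
            ((n + b).choose (n + ∑ i, κ i + 2) + 2 * (n + b).choose (n + ∑ i, κ i + 1)
              + (n + b).choose (n + ∑ i, κ i)) := by
    rcases eq_or_ne k l with rfl | hkl
    · simp only [hdiag, zero_mul, add_zero]
    · have h := congrArg (Nat.cast (R := R)) (sum_piAntidiag_mul_mul_piChoose hn b κ hkl)
      push_cast at h
      rw [h]
      ring
  have htotal : ∑ k, ∑ l, W k l = (n + 1) * ρ := by simp [hρ, hn]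
  have hleft : ∑ k, (∑ l, W k l) * (κ k : R) = ρ * (∑ i, κ i : ℕ) := by
    simp only [hρ, ← mul_sum, Nat.cast_sum]
  have hright : ∑ k, ∑ l, W k l * (κ l : R) = ρ * (∑ i, κ i : ℕ) := by
    rw [sum_comm, ← hleft]
    simp only [hsymm, sum_mul]
  rw [sum_quadForm_mul, quadForm]
  simp only [hmoment, sum_add_distrib, ← sum_mul, htotal, hleft, hright]
  ring

lemma sum_piAntidiag_quadForm (hn : Fintype.card ι = n + 1) (b : ℕ) (hdiag : ∀ i, W i i = 0)
    (hρ : ∀ i, ∑ j, W i j = ρ) :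
    ∑ z ∈ piAntidiag univ b, quadForm W (fun i => (z i : R)) =
      (n + 1) * ρ * (n + b).choose (n + 2) := by
  have hmoment (k l : ι) :
      W k l * ∑ z ∈ piAntidiag univ b, (z k : R) * z l =
        W k l * (n + b).choose (n + 2) := by
    rcases eq_or_ne k l with rfl | hkl
    · simp only [hdiag, zero_mul]
    · simpa [piChoose_zero] using congrArg (fun m : ℕ => W k l * (m : R))
        (sum_piAntidiag_mul_mul_piChoose hn b 0 hkl)
  have h := sum_quadForm_mul (piAntidiag univ b) W (fun z i => (z i : R)) fun _ => 1
  simp only [mul_one, hmoment, ← sum_mul, hρ, sum_const, card_univ, hn, nsmul_eq_mul] at h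
  rw [h, Nat.cast_succ]

lemma sum_piAntidiag_mul_mul_quadForm (hn : Fintype.card ι = n + 1) (b : ℕ)
    (hdiag : ∀ i, W i i = 0) (hsymm : ∀ i j, W i j = W j i) (hρ : ∀ i, ∑ j, W i j = ρ)
    {k l : ι} (hkl : k ≠ l) :
    ∑ z ∈ piAntidiag univ b, z k * z l * quadForm W (fun i => (z i : R)) =
      (n + 1) * ρ * (n + b).choose (n + 4)
        + 4 * ρ * ((n + b).choose (n + 4) + (n + b).choose (n + 3))
        + 2 * W k l *
          ((n + b).choose (n + 4) + 2 * (n + b).choose (n + 3) + (n + b).choose (n + 2)) := by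
  have hform : quadForm W (fun i => ((Pi.single l 1 + Pi.single k 1 : ι → ℕ) i : R)) =
      2 * W k l := by
    simp [quadForm, Pi.single_apply, mul_add, sum_add_distrib, hdiag, hsymm l k, two_mul]
  have hdegree : ∑ i, (Pi.single l 1 + Pi.single k 1 : ι → ℕ) i = 2 := by
    simp [sum_add_distrib]
  have h := sum_piAntidiag_quadForm_mul_piChoose hn b hdiag hsymm hρ
    (Pi.single l 1 + Pi.single k 1)
  simp only [← mul_eq_piChoose _ hkl, hform, hdegree, Nat.cast_mul, mul_comm (quadForm W _)] at h
  rw [h]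
  push_cast
  ring

lemma sum_piAntidiag_quadForm_sq (hn : Fintype.card ι = n + 1) (b : ℕ)
    (hdiag : ∀ i, W i i = 0) (hsymm : ∀ i j, W i j = W j i) (hρ : ∀ i, ∑ j, W i j = ρ)
    (hσ : ∀ i, ∑ j, W i j ^ 2 = σ) :
    ∑ z ∈ piAntidiag univ b, quadForm W (fun i => (z i : R)) ^ 2 =
      ((n + 1) * ρ) ^ 2 * (n + b).choose (n + 4)
        + 4 * (n + 1) * ρ ^ 2 * ((n + b).choose (n + 4) + (n + b).choose (n + 3))
        + 2 * (n + 1) * σ *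
          ((n + b).choose (n + 4) + 2 * (n + b).choose (n + 3) + (n + b).choose (n + 2)) := by
  have hmoment (k l : ι) :
      W k l * ∑ z ∈ piAntidiag univ b, z k * z l * quadForm W (fun i => (z i : R)) =
        W k l * ((n + 1) * ρ * (n + b).choose (n + 4)
            + 4 * ρ * ((n + b).choose (n + 4) + (n + b).choose (n + 3)))
          + W k l ^ 2 * (2 *
            ((n + b).choose (n + 4) + 2 * (n + b).choose (n + 3) + (n + b).choose (n + 2))) := by
    rcases eq_or_ne k l with rfl | hkl
    · simp [hdiag]
    · rw [sum_piAntidiag_mul_mul_quadForm hn b hdiag hsymm hρ hkl]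
      ring
  simp only [sq (quadForm W _), sum_quadForm_mul, hmoment, sum_add_distrib, ← sum_mul, hρ, hσ,
    sum_const, card_univ, hn, nsmul_eq_mul]
  push_cast
  ring

lemma cast_choose_add_succ {K : Type*} [Field K] [CharZero K] (n b k : ℕ) :
    ((n + b).choose (n + (k + 1)) : K) = (n + b).choose (n + k) * (b - k) / (n + k + 1) := by
  rw [eq_div_iff (by exact_mod_cast (n + k).succ_ne_zero)]
  have hrec := Nat.choose_succ_right_eq (n + b) (n + k)
  rw [Nat.add_sub_add_left] at hrec
  rcases le_or_gt k b with hk | hk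
  · rw [← Nat.cast_sub hk]
    exact_mod_cast hrec
  · rw [Nat.choose_eq_zero_of_lt (by omega), Nat.choose_eq_zero_of_lt (by omega)]
    simp

lemma sum_piAntidiag_quadForm_sub_sq {K : Type*} [Field K] [CharZero K] {W : ι → ι → K}
    {ρ σ : K} (hn : Fintype.card ι = n + 1) (b : ℕ)
    (hdiag : ∀ i, W i i = 0) (hsymm : ∀ i j, W i j = W j i) (hρ : ∀ i, ∑ j, W i j = ρ)
    (hσ : ∀ i, ∑ j, W i j ^ 2 = σ) :
    ∑ z ∈ piAntidiag univ b,
        (quadForm W (fun i => (z i : K)) - ρ * (b * (b - 1)) / (n + 2)) ^ 2 =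
      (n + b).choose n * (2 * (b * (b - 1) * (n + 1 + b) * (n + b + 2))) /
        ((n + 2) * (n + 3) * (n + 4)) * (σ - ρ ^ 2 / (n + 2)) := by
  have hcount : ∑ _z ∈ piAntidiag (univ : Finset ι) b, (1 : K) = (n + b).choose n := by
    simpa [piChoose_zero] using congrArg (Nat.cast (R := K)) (sum_piAntidiag_piChoose hn b 0)
  have h₁ : (n : K) + 1 ≠ 0 := by exact_mod_cast (n + 0).succ_ne_zero
  have h₂ : (n : K) + 2 ≠ 0 := by exact_mod_cast (n + 1).succ_ne_zero
  have h₃ : (n : K) + 3 ≠ 0 := by exact_mod_cast (n + 2).succ_ne_zero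
  have h₄ : (n : K) + 4 ≠ 0 := by exact_mod_cast (n + 3).succ_ne_zero
  have c₁ : ((n + b).choose (n + 1) : K) = (n + b).choose n * b / (n + 1) := by
    simpa using cast_choose_add_succ (K := K) n b 0
  have c₂ : ((n + b).choose (n + 2) : K) = (n + b).choose (n + 1) * (b - 1) / (n + 2) := by
    rw [cast_choose_add_succ n b 1]; push_cast; ring
  have c₃ : ((n + b).choose (n + 3) : K) = (n + b).choose (n + 2) * (b - 2) / (n + 3) := by
    rw [cast_choose_add_succ n b 2]; push_cast; ring
  have c₄ : ((n + b).choose (n + 4) : K) = (n + b).choose (n + 3) * (b - 3) / (n + 4) := by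
    rw [cast_choose_add_succ n b 3]; push_cast; ring
  have hexpand (x y : K) : (x - y) ^ 2 = x ^ 2 - 2 * y * x + y ^ 2 * 1 := by ring
  simp only [hexpand, sum_add_distrib, sum_sub_distrib, ← mul_sum, hcount,
    sum_piAntidiag_quadForm hn b hdiag hρ,
    sum_piAntidiag_quadForm_sq hn b hdiag hsymm hρ hσ]
  rw [c₄, c₃, c₂, c₁]
  field_simp
  ring

end Moments

section CyclicForm

lemma sum_sum_mul_forwardDiff_mul_forwardDiff {G R : Type*} [AddCommGroup G] [Fintype G]
    [CommRing R] (w u : G → R) (g : G) :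
    ∑ i, ∑ j, w (i - j) * ((u (i + g) - u i) * (u (j + g) - u j)) =
      ∑ i, ∑ j, (2 * w (i - j) - w (i - j - g) - w (i - j + g)) * (u i * u j) := by
  have shift (f : G → R) : ∑ i, f (i + g) = ∑ i, f i := Equiv.sum_comp (Equiv.addRight g) f
  have hboth : ∑ i, ∑ j, w (i - j) * (u (i + g) * u (j + g)) =
      ∑ i, ∑ j, w (i - j) * (u i * u j) := by
    rw [← shift fun i => ∑ j, w (i - j) * (u i * u j)]
    refine sum_congr rfl fun i _ => ?_
    rw [← shift fun j => w (i + g - j) * (u (i + g) * u j)]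
    simp only [add_sub_add_right_eq_sub]
  have hleft : ∑ i, ∑ j, w (i - j) * (u (i + g) * u j) =
      ∑ i, ∑ j, w (i - j - g) * (u i * u j) := by
    rw [← shift fun i => ∑ j, w (i - j - g) * (u i * u j)]
    simp only [sub_right_comm _ _ g, add_sub_cancel_right]
  have hright : ∑ i, ∑ j, w (i - j) * (u i * u (j + g)) =
      ∑ i, ∑ j, w (i - j + g) * (u i * u j) := by
    refine sum_congr rfl fun i _ => ?_
    rw [← shift fun j => w (i - j + g) * (u i * u j)]
    simp only [sub_add_eq_sub_sub, sub_add_cancel]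
  simp only [sub_mul, mul_sub, sum_sub_distrib, hboth, hleft, hright, mul_assoc, ← mul_sum]
  ring

variable {a b : ℕ}

/-- The weight `i * (a - i)` of the residue class of `0 ≤ i ≤ a`. It inverts the second difference
on `ZMod a` up to constants. -/
def cyclicWeight (c : ZMod a) : ℚ :=
  c.val * (a - c.val)

lemma cyclicWeight_zero : cyclicWeight (0 : ZMod a) = 0 := by
  simp [cyclicWeight]

lemma cyclicWeight_natCast {i : ℕ} (hi : i ≤ a) : cyclicWeight (i : ZMod a) = i * (a - i) := by
  rcases hi.lt_or_eq with hlt | rfl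
  · rw [cyclicWeight, ZMod.val_cast_of_lt hlt]
  · simp [cyclicWeight]

variable [NeZero a]

lemma cyclicWeight_neg (c : ZMod a) : cyclicWeight (-c) = cyclicWeight c := by
  have hneg : -c = (a - c.val : ℕ) := by simp [Nat.cast_sub c.val_le]
  rw [hneg, cyclicWeight_natCast (Nat.sub_le _ _), cyclicWeight, Nat.cast_sub c.val_le]
  ring

lemma cyclicWeight_sub_comm (c d : ZMod a) : cyclicWeight (c - d) = cyclicWeight (d - c) := by
  rw [← cyclicWeight_neg, neg_sub]

lemma two_mul_cyclicWeight_sub (c : ZMod a) :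
    2 * cyclicWeight c - cyclicWeight (c - 1) - cyclicWeight (c + 1) =
      2 - 2 * a * if c = 0 then 1 else 0 := by
  obtain ⟨i, hi, rfl⟩ : ∃ i < a, c = (i : ZMod a) := ⟨c.val, c.val_lt, c.natCast_zmod_val.symm⟩
  rcases i with - | i
  · have hone : cyclicWeight (1 : ZMod a) = a - 1 := by
      simpa using cyclicWeight_natCast (NeZero.one_le (n := a))
    simp only [Nat.cast_zero, zero_sub, zero_add, cyclicWeight_neg, cyclicWeight_zero, hone,
      if_true]
    ring
  · have hne : ((i + 1 : ℕ) : ZMod a) ≠ 0 := by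
      rw [Ne, ZMod.natCast_eq_zero_iff]
      exact Nat.not_dvd_of_pos_of_lt i.succ_pos hi
    have hprev : ((i + 1 : ℕ) : ZMod a) - 1 = (i : ℕ) := by simp
    have hnext : ((i + 1 : ℕ) : ZMod a) + 1 = (i + 2 : ℕ) := by push_cast; ring
    rw [if_neg hne, hprev, hnext, cyclicWeight_natCast hi.le, cyclicWeight_natCast (by omega),
      cyclicWeight_natCast (by omega)]
    push_cast
    ring

lemma sum_comp_cyclicWeight_sub (f : ℚ → ℚ) (i : ZMod a) :
    ∑ j, f (cyclicWeight (i - j)) = ∑ k ∈ range a, f (k * (a - k)) := by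
  have hsub : ∑ j, f (cyclicWeight (i - j)) = ∑ c : ZMod a, f (cyclicWeight c) :=
    Equiv.sum_comp (Equiv.subLeft i) fun c => f (cyclicWeight c)
  rw [hsub, sum_zmod_eq_sum_range]
  exact sum_congr rfl fun k hk => by rw [cyclicWeight_natCast (mem_range.1 hk).le]

lemma sum_cyclicWeight_sub (i : ZMod a) :
    ∑ j, cyclicWeight (i - j) = a * ((a : ℚ) ^ 2 - 1) / 6 := by
  rw [sum_comp_cyclicWeight_sub fun x => x]
  simp only [mul_sub, sum_sub_distrib, ← sum_mul, ← sq, sum_range_cast, sum_range_cast_sq]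
  ring

lemma sum_cyclicWeight_sub_sq (i : ZMod a) :
    ∑ j, cyclicWeight (i - j) ^ 2 = a * ((a : ℚ) ^ 4 - 1) / 30 := by
  have hexpand (k : ℕ) : ((k : ℚ) * (a - k)) ^ 2 = k ^ 2 * a ^ 2 - k ^ 3 * (2 * a) + k ^ 4 := by
    ring
  rw [sum_comp_cyclicWeight_sub fun x => x ^ 2]
  simp only [hexpand, sum_add_distrib, sum_sub_distrib, ← sum_mul, sum_range_cast_sq,
    sum_range_cast_cube, sum_range_cast_pow_four]
  ring

/-- The quadratic form on functions on `ZMod a` with circulant matrix `cyclicWeight (i - j)`. -/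
def cyclicForm (f : ZMod a → ℚ) : ℚ :=
  quadForm (fun i j => cyclicWeight (i - j)) f

lemma cyclicForm_forwardDiff (u : ZMod a → ℚ) :
    cyclicForm (fun i => u (i + 1) - u i) = 2 * (∑ i, u i) ^ 2 - 2 * a * ∑ i, u i ^ 2 := by
  rw [cyclicForm, quadForm, sum_sum_mul_forwardDiff_mul_forwardDiff]
  simp only [two_mul_cyclicWeight_sub, sub_eq_zero, sub_mul, sum_sub_distrib, mul_assoc, ite_mul,
    one_mul, zero_mul, ← mul_sum, sum_ite_eq, mem_univ, if_true, ← sum_mul, ← sq]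

lemma cyclicForm_const_sub_mul (x y : ℚ) (f : ZMod a → ℚ) :
    cyclicForm (fun i => x - y * f i) =
      x * (a * x - 2 * y * ∑ i, f i) * (a * ((a : ℚ) ^ 2 - 1) / 6) + y ^ 2 * cyclicForm f := by
  have hconst : ∑ i : ZMod a, ∑ j, cyclicWeight (i - j) = a * (a * ((a : ℚ) ^ 2 - 1) / 6) := by
    simp [sum_cyclicWeight_sub, ZMod.card]
  have hleft : ∑ i : ZMod a, ∑ j, cyclicWeight (i - j) * f i =
      (∑ i, f i) * (a * ((a : ℚ) ^ 2 - 1) / 6) := by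
    simp only [← sum_mul, sum_cyclicWeight_sub, mul_comm, ← mul_sum]
  have hright : ∑ i : ZMod a, ∑ j, cyclicWeight (i - j) * f j =
      (∑ i, f i) * (a * ((a : ℚ) ^ 2 - 1) / 6) := by
    rw [sum_comm, ← hleft]
    simp only [cyclicWeight_sub_comm]
  have hexpand (i j : ZMod a) : cyclicWeight (i - j) * ((x - y * f i) * (x - y * f j)) =
      x ^ 2 * cyclicWeight (i - j) - x * y * (cyclicWeight (i - j) * f i)
        - x * y * (cyclicWeight (i - j) * f j)
        + y ^ 2 * (cyclicWeight (i - j) * (f i * f j)) := by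
    ring
  simp only [cyclicForm, quadForm, hexpand, sum_add_distrib, sum_sub_distrib, ← mul_sum, hconst,
    hleft, hright]
  ring

lemma card_eq_sub_cyclicForm_coreSteps (hab : a.Coprime b) {μ : YoungDiagram} (ha : μ.IsCore a)
    (hb : μ.IsCore b) (r : ZMod a) :
    (μ.card : ℚ) = ((a : ℚ) ^ 2 - 1) * ((b : ℚ) ^ 2 - 1) / 24
      - cyclicForm (fun k => (coreSteps b μ r k : ℚ)) / 4 := by
  let u (k : ZMod a) : ℕ := leastGap a (betaSet μ) (r + k * b)
  have hu : IsCyclicPath b u := (isApery_leastGap_betaSet hb).isCyclicPath hab r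
  have hbij : Function.Bijective fun k : ZMod a => r + k * b :=
    (Equiv.addLeft r).bijective.comp (ZMod.unitOfCoprime b hab.symm).mulRight_bijective
  have hsum (f : ℕ → ℚ) : ∑ c, f (leastGap a (betaSet μ) c) = ∑ k, f (u k) :=
    (hbij.sum_comp fun c => f (leastGap a (betaSet μ) c)).symm
  have hdiff (k : ZMod a) : (u (k + 1) : ℚ) - u k = b - a * coreSteps b μ r k := by
    have : (u k : ℚ) + b = u (k + 1) + a * coreSteps b μ r k := by
      exact_mod_cast hu.add_eq_add_mul_cyclicSteps k
    linarith
  have hsteps : ∑ k, (coreSteps b μ r k : ℚ) = b := by exact_mod_cast hu.sum_cyclicSteps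
  have hform := cyclicForm_forwardDiff fun k => (u k : ℚ)
  simp only [hdiff, cyclicForm_const_sub_mul, hsteps] at hform
  have ha₀ : (a : ℚ) ≠ 0 := NeZero.ne _
  rw [card_eq_sum_leastGap ha, hsum fun x => (x : ℚ), hsum fun x => (x : ℚ) ^ 2]
  field_simp
  linarith

lemma sum_piAntidiag_cyclicForm_sub_sq (n b : ℕ) :
    ∑ z ∈ piAntidiag (univ : Finset (ZMod (n + 1))) b,
        (cyclicForm (fun i => (z i : ℚ)) - n * (n + 1) * b * ((b : ℚ) - 1) / 6) ^ 2 =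
      (n + b).choose n *
        (((n : ℚ) + 1) * n * b * ((b : ℚ) - 1) * (n + 1 + b) * (n + b + 2) / 90) := by
  have hcentral := sum_piAntidiag_quadForm_sub_sq (ZMod.card (n + 1)) b
    (fun i : ZMod (n + 1) => by rw [sub_self, cyclicWeight_zero]) cyclicWeight_sub_comm
    sum_cyclicWeight_sub sum_cyclicWeight_sub_sq
  have hmean : ((n + 1 : ℕ) * (((n + 1 : ℕ) : ℚ) ^ 2 - 1) / 6) * (b * ((b : ℚ) - 1)) /
      ((n : ℚ) + 2) = n * (n + 1) * b * ((b : ℚ) - 1) / 6 := by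
    push_cast
    field_simp
    ring
  rw [hmean] at hcentral
  refine hcentral.trans ?_
  push_cast
  field_simp
  ring

end CyclicForm

end SimultaneousCores

/-- Second central moment of size over `(n+1,b)`-cores. -/
theorem second_moment_cores (n b : ℕ) (hn : 1 ≤ n) (hb : 0 < b)
    (h : Nat.Coprime (n + 1) b) :
    ∑ᶠ μ ∈ {μ : YoungDiagram | μ.IsCore (n + 1) ∧ μ.IsCore b},
        ((μ.card : ℚ) - (n : ℚ) * ((b : ℚ) - 1) * ((n : ℚ) + b + 2) / 24) ^ 2
      = (1 / ((n : ℚ) + 1)) * ((n + b).choose b : ℚ) *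
          (((n : ℚ) + 1) * n * b * ((b : ℚ) - 1) * ((n : ℚ) + 1 + b) * ((n : ℚ) + b + 2)
            / 1440) := by
  have htransport := SimultaneousCores.card_nsmul_finsum_mem_eq_sum
    (SimultaneousCores.bijOn_coreSteps h)
    (F := fun μ => ((μ.card : ℚ) - n * (b - 1) * (n + b + 2) / 24) ^ 2)
    (G := fun z => (SimultaneousCores.cyclicForm (fun i => (z i : ℚ))
      - n * (n + 1) * b * (b - 1) / 6) ^ 2 / 16)
    fun μ hμ r => by
      rw [SimultaneousCores.card_eq_sub_cyclicForm_coreSteps h hμ.1 hμ.2 r]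
      push_cast
      ring
  rw [ZMod.card, nsmul_eq_mul, ← Finset.sum_div,
    SimultaneousCores.sum_piAntidiag_cyclicForm_sub_sq, Nat.cast_succ] at htransport
  have hpos : (n : ℚ) + 1 ≠ 0 := n.cast_add_one_ne_zero
  rw [mul_assoc (1 / _), one_div, eq_inv_mul_iff_mul_eq₀ hpos, htransport, Nat.choose_symm_add]
  ring
end
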